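/- Let s, α ∈ ℕ with α ≥ 2, let β, g ∈ ℕ with β ≥ 2α, g ≥ 2αs and g ≥ ⌊s(β−1)/2⌋, and let b ≥ βgs be a prime. Then there exists a constant A > 0 (depending only on α, β, b, s) such that for every w ∈ ℕ, the digital net P ⊂ [0,1)^s of the paper's construction, of cardinality N = b^{gw}, satisfies ∑_{k,l ∈ P⊥ \ {0}} |K̂_{α,s}(k,l)| ≤ A · (log N)^{s−1} / N^{2α}. -/

import Mathlib

open scoped BigOperators

/-- The `i`-th digit (starting from `i = 0`) of the `b`-adic expansion of `k`. -/
def bdigit (b k i : ℕ) : ℕ := k / b ^ i % b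

/-- The set of indices of nonzero `b`-adic digits of `k`. -/
def bsupp (b k : ℕ) : Finset ℕ := (Finset.range (k + 1)).filter fun i => bdigit b k i ≠ 0

/-- The Hamming metric `κ(k)`: the number of nonzero `b`-adic digits of `k`. -/
def hamming (b k : ℕ) : ℕ := (bsupp b k).card

/-- The Dick metric `μ_α(k)`: the sum of the `min(v, α)` largest exponents-plus-one
`a_1 > a_2 > ⋯` of the nonzero `b`-adic digits of `k`. -/
def dick (b α k : ℕ) : ℕ := ((((bsupp b k).sort (· ≤ ·)).reverse.take α).map (· + 1)).sum

/-- Digitwise addition `k ⊕ l` modulo `b` of the `b`-adic digits. -/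
def dadd (b k l : ℕ) : ℕ :=
  ∑ i ∈ Finset.range (k + l + 1), (bdigit b k i + bdigit b l i) % b * b ^ i

/-- Digitwise subtraction `k ⊖ l` modulo `b` of the `b`-adic digits. -/
def dsub (b k l : ℕ) : ℕ :=
  ∑ i ∈ Finset.range (k + l + 1), (bdigit b k i + (b - bdigit b l i)) % b * b ^ i

/-- Hamming metric of a vector: sum over coordinates. -/
def hammingVec (b : ℕ) {s : ℕ} (k : Fin s → ℕ) : ℕ := ∑ j, hamming b (k j)

/-- Dick metric of a vector: sum over coordinates. -/
def dickVec (b α : ℕ) {s : ℕ} (k : Fin s → ℕ) : ℕ := ∑ j, dick b α (k j)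

/-- The column vector of the first `n` `b`-adic digits of `k`, as a vector over `F_b = ZMod b`. -/
def trv (b n : ℕ) (k : ℕ) : Fin n → ZMod b := fun i => (bdigit b k i.1 : ZMod b)

/-- The dual net `P⊥` of the digital net with generating matrices `C`. -/
def dualNet (b : ℕ) {s n m : ℕ} (C : Fin s → Matrix (Fin n) (Fin m) (ZMod b)) :
    Set (Fin s → ℕ) :=
  {k | (∀ j, k j < b ^ n) ∧ ∑ j, ((C j).transpose).mulVec (trv b n (k j)) = 0}

/-- The dual net `P∞⊥` of the digital net with generating matrices `C` (no upper bound
on the components of `k`). -/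
def dualNetInf (b : ℕ) {s n m : ℕ} (C : Fin s → Matrix (Fin n) (Fin m) (ZMod b)) :
    Set (Fin s → ℕ) :=
  {k | ∑ j, ((C j).transpose).mulVec (trv b n (k j)) = 0}

/-- The `h`-th point of the digital net generated by the matrices `C` over `ZMod b`:
its `j`-th coordinate is `∑_{i=1}^n ξ_i b^{-i}` with `(ξ_1,…,ξ_n)ᵀ = C_j · (η_0,…,η_{m-1})ᵀ`,
where `η` are the `b`-adic digits of `h`. -/
noncomputable def netPoint (b : ℕ) {s n m : ℕ} (C : Fin s → Matrix (Fin n) (Fin m) (ZMod b))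
    (h : ℕ) : Fin s → ℝ :=
  fun j => ∑ i : Fin n,
    (((C j).mulVec (fun v : Fin m => (bdigit b h v.1 : ZMod b)) i).val : ℝ) / (b : ℝ) ^ (i.1 + 1)

/-- Sum of the `α` largest elements of a finite set of (0-based) row indices, counted
1-based, i.e. each index `i` contributes `i + 1`. -/
def topSum (α : ℕ) (R : Finset ℕ) : ℕ := (((R.sort (· ≤ ·)).reverse.take α).map (· + 1)).sum

/-- The digital net with generating matrices `C_1,…,C_s ∈ F_b^{n×m}` is an order `α`
digital `(t,m,s)`-net: for every choice of rows `i_{j,v_j} < ⋯ < i_{j,1}` from each `C_j`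
such that the 1-based indices of the `min(α, v_j)` largest chosen rows of each matrix sum
to at most `αm - t`, the chosen rows are linearly independent over `F_b`. -/
def isOrderNet (b α t m : ℕ) {s n : ℕ} (C : Fin s → Matrix (Fin n) (Fin m) (ZMod b)) : Prop :=
  ∀ R : Fin s → Finset (Fin n),
    (∑ j, topSum α ((R j).image Fin.val)) ≤ α * m - t →
    LinearIndependent (ZMod b) fun p : Σ j : Fin s, {i : Fin n // i ∈ R j} => C p.1 p.2.1

/-- The minimum Dick metric `μ_α(P)` of the digital net with generating matrices `C`,
namely the minimum of `μ_α(k)` over nonzero elements `k` of the dual net. -/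
noncomputable def minDick (b α : ℕ) {s n m : ℕ}
    (C : Fin s → Matrix (Fin n) (Fin m) (ZMod b)) : ℕ :=
  sInf (dickVec b α '' {k | k ∈ dualNet b C ∧ k ≠ 0})

/-- The minimum Hamming metric `κ(P)` of the digital net with generating matrices `C`. -/
noncomputable def minHamming (b : ℕ) {s n m : ℕ}
    (C : Fin s → Matrix (Fin n) (Fin m) (ZMod b)) : ℕ :=
  sInf (hammingVec b '' {k | k ∈ dualNet b C ∧ k ≠ 0})

/-- The Chen–Skriganov generating matrix (for one coordinate `j`, with row parameters
`βr l = β_{j,l}`): the entry in (1-based) row `u = (l-1)w + i` and column `v` is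
`binom(v-1, i-1) · β_{j,l}^{v-i}` (which vanishes when `v < i` since the binomial
coefficient is `0`). Indices here are 0-based. -/
def csMatrix (b w n : ℕ) (βr : ℕ → ZMod b) : Matrix (Fin n) (Fin n) (ZMod b) :=
  Matrix.of fun u v =>
    (Nat.choose v.1 (u.1 % w) : ZMod b) * βr (u.1 / w) ^ (v.1 - u.1 % w)

/-- Dick's digit interlacing composition with interlacing factor `α` applied to the
generating matrices `C_1,…,C_{αs} ∈ F_b^{m×m}`: the resulting matrices
`D_1,…,D_s ∈ F_b^{αm×m}` are such that the (1-based) `(α(h-1)+i)`-th row of `D_j` is the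
`h`-th row of `C_{α(j-1)+i}`. -/
def interlace {R : Type*} (α s m : ℕ) (C : Fin (α * s) → Matrix (Fin m) (Fin m) R) :
    Fin s → Matrix (Fin (α * m)) (Fin m) R :=
  fun j => Matrix.of fun r v =>
    C ⟨α * j.1 + r.1 % α, by
        have hα : 0 < α := by
          rcases Nat.eq_zero_or_pos α with h | h
          · exact absurd r.2 (by simp [h])
          · exact h
        have h1 : α * (j.1 + 1) ≤ α * s := Nat.mul_le_mul_left α j.2
        have h2 : α * (j.1 + 1) = α * j.1 + α := by ring
        have h3 : r.1 % α < α := Nat.mod_lt _ hα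
        omega⟩
      ⟨r.1 / α, by
        have hα : 0 < α := by
          rcases Nat.eq_zero_or_pos α with h | h
          · exact absurd r.2 (by simp [h])
          · exact h
        exact Nat.div_lt_of_lt_mul r.2⟩
      v

open MeasureTheory

/-- The `i`-th (for `i ≥ 1`) `b`-adic digit `ξ_i` of a real number `x ∈ [0,1)`, using the
expansion in which infinitely many digits differ from `b - 1`. -/
noncomputable def rdigit (b : ℕ) (x : ℝ) (i : ℕ) : ℤ := ⌊x * (b : ℝ) ^ i⌋ % b

/-- The `k`-th `b`-adic Walsh function, `wal_k(x) = ω_b^{κ_0 ξ_1 + κ_1 ξ_2 + ⋯}` where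
`ω_b = exp(2π√-1/b)`, `κ` are the `b`-adic digits of `k` and `ξ` those of `x`. -/
noncomputable def walsh (b k : ℕ) (x : ℝ) : ℂ :=
  Complex.exp (2 * (Real.pi : ℂ) * Complex.I / (b : ℂ) *
    ∑ a ∈ Finset.range (k + 1), (bdigit b k a : ℂ) * (rdigit b x (a + 1) : ℂ))

/-- The `k`-th `b`-adic Walsh function on `[0,1)^s`, `wal_k(x) = ∏_j wal_{k_j}(x_j)`. -/
noncomputable def walshVec (b : ℕ) {s : ℕ} (k : Fin s → ℕ) (x : Fin s → ℝ) : ℂ :=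
  ∏ j, walsh b (k j) (x j)

/-- The Bernoulli polynomial `B_r` evaluated at a real number. -/
noncomputable def bernoulliPoly (r : ℕ) (x : ℝ) : ℝ := Polynomial.aeval x (Polynomial.bernoulli r)

/-- The reproducing kernel `K_α` of the Sobolev space `H_α`:
`K_α(x,y) = ∑_{r=0}^{α} B_r(x)B_r(y)/(r!)² + (-1)^{α+1} B_{2α}(|x-y|)/(2α)!`. -/
noncomputable def Kker (α : ℕ) (x y : ℝ) : ℝ :=
  ∑ r ∈ Finset.range (α + 1), bernoulliPoly r x * bernoulliPoly r y / ((r.factorial : ℝ)) ^ 2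
    + (-1 : ℝ) ^ (α + 1) * bernoulliPoly (2 * α) |x - y| / ((2 * α).factorial : ℝ)

/-- The `(k,l)`-th Walsh coefficient of the kernel `K_α`. -/
noncomputable def Khat (b α : ℕ) (k l : ℕ) : ℂ :=
  ∫ x in Set.Ico (0 : ℝ) 1, ∫ y in Set.Ico (0 : ℝ) 1,
    (Kker α x y : ℂ) * (starRingEnd ℂ) (walsh b k x) * walsh b l y

/-- The `(k,l)`-th Walsh coefficient of the `s`-variate kernel
`K_{α,s}(x,y) = ∏_j K_α(x_j, y_j)`. -/
noncomputable def KhatS (b α s : ℕ) (k l : Fin s → ℕ) : ℂ :=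
  ∫ x in Set.univ.pi fun _ : Fin s => Set.Ico (0 : ℝ) 1,
    ∫ y in Set.univ.pi fun _ : Fin s => Set.Ico (0 : ℝ) 1,
      ((∏ j, Kker α (x j) (y j) : ℝ) : ℂ) * (starRingEnd ℂ) (walshVec b k x) * walshVec b l y

/-- The `k`-th Walsh coefficient `b̂_r(k)` of the normalized Bernoulli polynomial `B_r/r!`. -/
noncomputable def bhat (b r k : ℕ) : ℂ :=
  ∫ x in Set.Ico (0 : ℝ) 1,
    ((bernoulliPoly r x / (r.factorial : ℝ) : ℝ) : ℂ) * (starRingEnd ℂ) (walsh b k x)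

/-- The `(k,l)`-th Walsh coefficient `b̂_{r,per}(k,l)` of `(x,y) ↦ B̃_r(x-y)/r!`, where
`B̃_r` is the 1-periodic extension of the Bernoulli polynomial `B_r` from `[0,1)` to `ℝ`. -/
noncomputable def bhatPer (b r : ℕ) (k l : ℕ) : ℂ :=
  ∫ x in Set.Ico (0 : ℝ) 1, ∫ y in Set.Ico (0 : ℝ) 1,
    ((bernoulliPoly r (Int.fract (x - y)) / (r.factorial : ℝ) : ℝ) : ℂ) *
      (starRingEnd ℂ) (walsh b k x) * walsh b l y

/-!
The Walsh coefficients of the kernel factorise over the coordinates. In one coordinate, cutting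
the unit square into `b²` congruent cells strips the lowest digits of `k` and `l`; on an
off-diagonal cell `B_{2α}(|x - y|)` is a polynomial in `x - y`, so by recursion `K̂_α(k,l)` vanishes
as soon as `k` and `l` differ in more than `2α` digits, while `K̂_α(k,k) = O(b^{-2μ_α(k)})`.

The generating rows of the Chen–Skriganov net are Hermite interpolation functionals on polynomials
of degree `< gw`, with orders `< w`. Any `g` of them are among the `gw` functionals at at most `g`
nodes, hence independent. So two distinct elements of the dual net differ in more than `g ≥ 2αs`
digits, thus in more than `2α` digits of some coordinate, and only the diagonal `k = l` survives in
the double sum. It is summed by counting: the net has order `1` and, after interlacing, order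
`β ≥ 2α`; the net property of order `1` bounds the number of `k` with a given `μ_1(k)`, and the
excess of `2μ_α` over `μ_1`, which is large by concavity of `α ↦ μ_α`, pays for the sum over
`μ_1(k)`.
-/

/-! ### Hermite interpolation with Hasse derivatives -/

section Hermite

open Polynomial

/-- The functional `f ↦ f^{[k]}(q)` (Hasse derivative of order `k`) on polynomials of degree
`< m`, written in the monomial basis. -/
def hasseRow {R : Type*} [Semiring R] (q : R) (k m : ℕ) : Fin m → R :=
  fun v => (v.1.choose k : R) * q ^ (v.1 - k)

variable {F : Type*} [Field F]

lemma sum_coeff_mul_hasseRow {f : F[X]} {m : ℕ} (hf : f.natDegree < m) (q : F) (k : ℕ) :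
    ∑ v, f.coeff v.1 * hasseRow q k m v = (hasseDeriv k f).eval q := by
  rw [hasseDeriv_apply, sum_over_range' _ (by simp) m hf, eval_finsetSum, Finset.sum_range]
  refine Finset.sum_congr rfl fun v _ => ?_
  rw [eval_monomial, hasseRow]
  ring

lemma eval_hasseDeriv_X_sub_C_pow_mul (q : F) (e k : ℕ) (f : F[X]) :
    (hasseDeriv k ((X - C q) ^ e * f)).eval q =
      if e ≤ k then (taylor q f).coeff (k - e) else 0 := by
  rw [← taylor_coeff, taylor_mul, taylor_pow]
  simp [coeff_X_pow_mul']

section TestPolynomial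

variable [DecidableEq F]

/-- The test polynomial `(X - p)^k ∏_{q ∈ Q, q ≠ p} (X - q)^{e q}` of Hermite interpolation. -/
noncomputable def hermitePoly (Q : Finset F) (e : F → ℕ) (p : F) (k : ℕ) : F[X] :=
  (X - C p) ^ k * ∏ q ∈ Q.erase p, (X - C q) ^ e q

lemma natDegree_hermitePoly_lt {Q : Finset F} {e : F → ℕ} {p : F} {k : ℕ} (hp : p ∈ Q)
    (hk : k < e p) : (hermitePoly Q e p k).natDegree < ∑ q ∈ Q, e q := by
  calc (hermitePoly Q e p k).natDegree ≤ k + ∑ q ∈ Q.erase p, e q := by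
        refine natDegree_mul_le.trans (add_le_add (by simp) ?_)
        exact (natDegree_prod_le _ _).trans (Finset.sum_le_sum fun q _ => by simp)
    _ < e p + ∑ q ∈ Q.erase p, e q := by gcongr
    _ = ∑ q ∈ Q, e q := Finset.add_sum_erase _ _ hp

lemma eval_hasseDeriv_hermitePoly_ne_zero (Q : Finset F) (e : F → ℕ) (p : F) (k : ℕ) :
    (hasseDeriv k (hermitePoly Q e p k)).eval p ≠ 0 := by
  rw [hermitePoly, eval_hasseDeriv_X_sub_C_pow_mul, if_pos le_rfl, Nat.sub_self,
    taylor_coeff_zero, eval_prod, Finset.prod_ne_zero_iff]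
  intro q hq
  simp [sub_ne_zero.2 (Finset.ne_of_mem_erase hq).symm]

lemma eval_hasseDeriv_hermitePoly_of_lt (Q : Finset F) (e : F → ℕ) (p : F) {k l : ℕ}
    (hl : l < k) : (hasseDeriv l (hermitePoly Q e p k)).eval p = 0 := by
  rw [hermitePoly, eval_hasseDeriv_X_sub_C_pow_mul, if_neg hl.not_ge]

lemma eval_hasseDeriv_hermitePoly_of_ne {Q : Finset F} {e : F → ℕ} {p q : F} (hq : q ∈ Q)
    (hqp : q ≠ p) (k : ℕ) {l : ℕ} (hl : l < e q) :
    (hasseDeriv l (hermitePoly Q e p k)).eval q = 0 := by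
  rw [hermitePoly, ← Finset.mul_prod_erase _ _ (Finset.mem_erase.2 ⟨hqp, hq⟩), mul_left_comm,
    eval_hasseDeriv_X_sub_C_pow_mul, if_neg hl.not_ge]

end TestPolynomial

variable {ι : Type*} [Fintype ι] {pt : ι → F} {ord : ι → ℕ}

/- A relation is tested on the Hermite polynomial vanishing at all conditions except one of
maximal order among those with nonzero coefficient. -/
theorem linearIndependent_hasseRow [DecidableEq F]
    (hinj : Function.Injective fun i => (pt i, ord i)) {e : F → ℕ}
    (he : ∀ i, ord i < e (pt i)) {m : ℕ} (hm : ∑ q ∈ Finset.univ.image pt, e q ≤ m) :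
    LinearIndependent F fun i => hasseRow (pt i) (ord i) m := by
  classical
  rw [Fintype.linearIndependent_iff]
  intro c hc
  have relation : ∀ f : F[X], f.natDegree < m →
      ∑ i, c i * (hasseDeriv (ord i) f).eval (pt i) = 0 := by
    intro f hf
    have hcv (v : Fin m) : ∑ i, c i * hasseRow (pt i) (ord i) m v = 0 := by
      simpa using congrFun hc v
    simp_rw [← sum_coeff_mul_hasseRow hf, Finset.mul_sum]
    rw [Finset.sum_comm]
    simp_rw [mul_left_comm (c _), ← Finset.mul_sum, hcv, mul_zero, Finset.sum_const_zero]
  by_contra! hne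
  obtain ⟨i₁, hi₁⟩ := hne
  obtain ⟨i₀, hi₀, hmax⟩ := Finset.exists_max_image (Finset.univ.filter fun i => c i ≠ 0) ord
    ⟨i₁, by simpa using hi₁⟩
  simp only [Finset.mem_filter, Finset.mem_univ, true_and] at hi₀ hmax
  have hmem (i : ι) : pt i ∈ Finset.univ.image pt := Finset.mem_image_of_mem _ (Finset.mem_univ i)
  have htest := relation _ ((natDegree_hermitePoly_lt (hmem i₀) (he i₀)).trans_le hm)
  rw [Finset.sum_eq_single_of_mem i₀ (Finset.mem_univ _)] at htest
  · exact mul_ne_zero hi₀ (eval_hasseDeriv_hermitePoly_ne_zero _ _ _ _) htest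
  intro i _ hi
  by_cases hci : c i = 0
  · rw [hci, zero_mul]
  by_cases hpt : pt i = pt i₀
  · have hord : ord i ≠ ord i₀ := fun h => hi (hinj (Prod.ext hpt h))
    rw [hpt, eval_hasseDeriv_hermitePoly_of_lt _ _ _ (lt_of_le_of_ne (hmax i hci) hord), mul_zero]
  · rw [eval_hasseDeriv_hermitePoly_of_ne (hmem i) hpt _ (he i), mul_zero]

lemma linearIndependent_hasseRow_of_lt (hinj : Function.Injective fun i => (pt i, ord i))
    {w m : ℕ} (hord : ∀ i, ord i < w) (hm : Fintype.card ι * w ≤ m) :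
    LinearIndependent F fun i => hasseRow (pt i) (ord i) m := by
  classical
  refine linearIndependent_hasseRow hinj (e := fun _ => w) hord ?_
  rw [Finset.sum_const, smul_eq_mul]
  exact (Nat.mul_le_mul_right _ Finset.card_image_le).trans hm

lemma linearIndependent_hasseRow_of_initial (hinj : Function.Injective fun i => (pt i, ord i))
    (hinit : ∀ i, ∀ k < ord i, ∃ i', pt i' = pt i ∧ ord i' = k) {m : ℕ}
    (hm : Fintype.card ι ≤ m) : LinearIndependent F fun i => hasseRow (pt i) (ord i) m := by
  classical
  refine linearIndependent_hasseRow hinj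
    (e := fun q => (Finset.univ.filter fun i => pt i = q).card) (fun i => ?_)
    ((Finset.card_eq_sum_card_image pt Finset.univ).symm.trans_le hm)
  have hsub : Finset.range (ord i + 1) ⊆
      (Finset.univ.filter fun i' => pt i' = pt i).image ord := by
    intro k hk
    rcases (Nat.lt_succ_iff.1 (Finset.mem_range.1 hk)).lt_or_eq with hlt | rfl
    · obtain ⟨i', hpt, rfl⟩ := hinit i k hlt
      exact Finset.mem_image_of_mem _ (by simpa using hpt)
    · exact Finset.mem_image_of_mem _ (by simp)
  simpa using (Finset.card_le_card hsub).trans Finset.card_image_le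

end Hermite

/-! ### Digits and digit metrics -/

section Digits

variable {b : ℕ}

lemma bdigit_lt (hb : 0 < b) (k i : ℕ) : bdigit b k i < b := Nat.mod_lt _ hb

lemma bdigit_zero_right (b k : ℕ) : bdigit b k 0 = k % b := by simp [bdigit]

lemma bdigit_zero_left (b i : ℕ) : bdigit b 0 i = 0 := by simp [bdigit]

lemma bdigit_succ (b k i : ℕ) : bdigit b k (i + 1) = bdigit b (k / b) i := by
  rw [bdigit, bdigit, Nat.pow_succ', Nat.div_div_eq_div_mul]

lemma bdigit_add (b k i a : ℕ) : bdigit b k (i + a) = bdigit b (k / b ^ a) i := by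
  rw [bdigit, bdigit, Nat.div_div_eq_div_mul, ← pow_add, add_comm]

lemma bdigit_eq_zero_of_lt {k i : ℕ} (h : k < b ^ i) : bdigit b k i = 0 := by
  rw [bdigit, Nat.div_eq_of_lt h, Nat.zero_mod]

lemma eq_of_bdigit_eq {n k l : ℕ} (hk : k < b ^ n) (hl : l < b ^ n)
    (h : ∀ i < n, bdigit b k i = bdigit b l i) : k = l := by
  have hmod : ∀ m ≤ n, k % b ^ m = l % b ^ m := by
    intro m hm
    induction m with
    | zero => simp only [pow_zero, Nat.mod_one]
    | succ m ih =>
      have hdigit : k / b ^ m % b = l / b ^ m % b := h m (by omega)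
      rw [Nat.mod_pow_succ, Nat.mod_pow_succ, ih (by omega), hdigit]
  simpa only [Nat.mod_eq_of_lt hk, Nat.mod_eq_of_lt hl] using hmod n le_rfl

/-- The positions at which the `b`-adic digits of `k` and `l` differ. -/
def bdiff (b k l : ℕ) : Finset ℕ :=
  (Finset.range (k + l + 1)).filter fun i => bdigit b k i ≠ bdigit b l i

/-- The Hamming distance of `k` and `l`, which is `κ(k ⊖ l)`. -/
def digitDist (b k l : ℕ) : ℕ := (bdiff b k l).card

lemma bsupp_eq_bdiff (b k : ℕ) : bsupp b k = bdiff b k 0 := by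
  simp only [bsupp, bdiff, bdigit_zero_left, add_zero]

lemma bsupp_zero (b : ℕ) : bsupp b 0 = ∅ :=
  Finset.filter_eq_empty_iff.2 fun i _ => not_not.2 (bdigit_zero_left b i)

lemma hamming_zero (b : ℕ) : hamming b 0 = 0 := by rw [hamming, bsupp_zero, Finset.card_empty]

lemma hamming_eq_digitDist (b k : ℕ) : hamming b k = digitDist b k 0 := by
  rw [hamming, digitDist, bsupp_eq_bdiff]

lemma mem_bdiff (hb : 1 < b) {k l i : ℕ} : i ∈ bdiff b k l ↔ bdigit b k i ≠ bdigit b l i := by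
  refine ⟨fun h => (Finset.mem_filter.1 h).2, fun h => Finset.mem_filter.2 ⟨?_, h⟩⟩
  rw [Finset.mem_range]
  by_contra! hi
  have hpow := Nat.lt_pow_self (n := i) hb
  exact h (by rw [bdigit_eq_zero_of_lt (by omega), bdigit_eq_zero_of_lt (by omega)])

lemma mem_bsupp (hb : 1 < b) {k i : ℕ} : i ∈ bsupp b k ↔ bdigit b k i ≠ 0 := by
  rw [bsupp_eq_bdiff, mem_bdiff hb, bdigit_zero_left]

lemma digitDist_eq (hb : 1 < b) (k l : ℕ) :
    digitDist b k l = (if k % b = l % b then 0 else 1) + digitDist b (k / b) (l / b) := by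
  have hsplit : bdiff b k l =
      (if k % b = l % b then ∅ else {0}) ∪ (bdiff b (k / b) (l / b)).image Nat.succ := by
    ext i
    rw [mem_bdiff hb, Finset.mem_union]
    cases i with
    | zero => split_ifs with h <;> simp [bdigit_zero_right, h]
    | succ i => split_ifs with h <;> simp [bdigit_succ, mem_bdiff hb]
  rw [digitDist, hsplit, Finset.card_union_of_disjoint,
    Finset.card_image_of_injective _ Nat.succ_injective, digitDist]
  · split_ifs <;> simp
  · split_ifs <;> simp

lemma hamming_eq (hb : 1 < b) (k : ℕ) :
    hamming b k = (if k % b = 0 then 0 else 1) + hamming b (k / b) := by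
  rw [hamming_eq_digitDist, hamming_eq_digitDist, digitDist_eq hb, Nat.zero_mod, Nat.zero_div]

lemma digitDist_le (hb : 1 < b) (k l : ℕ) : digitDist b k l ≤ hamming b k + hamming b l := by
  refine (Finset.card_le_card fun i hi => ?_).trans (Finset.card_union_le _ _)
  rw [Finset.mem_union, mem_bsupp hb, mem_bsupp hb]
  rw [mem_bdiff hb] at hi
  omega

lemma topSum_empty (α : ℕ) : topSum α ∅ = 0 := by simp [topSum]

lemma topSum_insert {R : Finset ℕ} {r : ℕ} (hr : ∀ x ∈ R, x < r) (α : ℕ) :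
    topSum (α + 1) (insert r R) = r + 1 + topSum α R := by
  have hsort : (insert r R).sort (· ≤ ·) = R.sort (· ≤ ·) ++ [r] := by
    have hnot : r ∉ R := fun h => (hr r h).false
    refine List.Perm.eq_of_pairwise (le := (· ≤ ·)) (fun _ _ _ _ => le_antisymm)
      (Finset.pairwise_sort _ _) ?_ ?_
    · refine List.pairwise_append.2 ⟨Finset.pairwise_sort _ _, List.pairwise_singleton _ _, ?_⟩
      intro x hx y hy
      rw [List.mem_singleton.1 hy]
      exact (hr x (by simpa using hx)).le
    · refine (Finset.sort_perm_toList _ _).trans ((Finset.toList_insert hnot).trans ?_)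
      exact ((Finset.sort_perm_toList _ _).symm.cons _).trans (List.perm_append_singleton _ _).symm
  simp [topSum, hsort]

lemma topSum_eq_sum (α : ℕ) {n : ℕ} {R : Finset ℕ} (hR : ∀ r ∈ R, r < n) :
    topSum α R = ∑ a ∈ Finset.range n, min α (R.filter fun r => a ≤ r).card := by
  induction R using Finset.induction_on_max generalizing α with
  | empty => simp [topSum_empty]
  | insert r R hr ih =>
    cases α with
    | zero => simp [topSum]
    | succ α =>
      rw [topSum_insert hr, ih α fun x hx => hR x (Finset.mem_insert_of_mem hx)]
      have hterm (a : ℕ) : min (α + 1) ((insert r R).filter fun x => a ≤ x).card =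
          (if a ≤ r then 1 else 0) + min α (R.filter fun x => a ≤ x).card := by
        rw [Finset.filter_insert]
        split_ifs with ha
        · rw [Finset.card_insert_of_notMem (by simpa using fun h => ((hr r h).false).elim)]
          omega
        · have hempty : R.filter (fun x => a ≤ x) = ∅ :=
            Finset.filter_eq_empty_iff.2 fun x hx => by have := hr x hx; omega
          simp [hempty]
      have hcard : ((Finset.range n).filter fun a => a ≤ r) = Finset.range (r + 1) := by
        have := hR r (Finset.mem_insert_self _ _)
        ext a
        simp only [Finset.mem_filter, Finset.mem_range]
        omega
      simp_rw [hterm]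
      rw [Finset.sum_add_distrib, ← Finset.card_filter, hcard, Finset.card_range]

lemma lt_sup_id_add_one {R : Finset ℕ} : ∀ r ∈ R, r < R.sup id + 1 := fun _ hr =>
  Nat.lt_succ_of_le (Finset.le_sup (f := id) hr)

lemma topSum_concave (x d : ℕ) (R : Finset ℕ) :
    x * topSum (x + d + 1) R + d * topSum 1 R ≤ (x + d) * topSum (x + 1) R := by
  simp only [topSum_eq_sum _ lt_sup_id_add_one, Finset.mul_sum]
  rw [← Finset.sum_add_distrib]
  refine Finset.sum_le_sum fun a _ => ?_
  generalize (R.filter fun r => a ≤ r).card = c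
  rcases Nat.eq_zero_or_pos c with rfl | hc
  · simp
  rw [min_eq_left (show 1 ≤ c from hc)]
  rcases le_total c (x + 1) with h | h
  · rw [min_eq_right h, min_eq_right (by omega)]
    nlinarith [Nat.mul_le_mul_left d hc]
  · rw [min_eq_left h]
    nlinarith [Nat.mul_le_mul_left x (min_le_left (x + d + 1) c)]

lemma topSum_one_le {R : Finset ℕ} {n : ℕ} (hR : ∀ r ∈ R, r < n) : topSum 1 R ≤ n := by
  rw [topSum_eq_sum 1 hR]
  exact (Finset.sum_le_sum fun a _ => min_le_left _ _).trans (by simp)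

lemma topSum_mono {α β : ℕ} (h : α ≤ β) (R : Finset ℕ) : topSum α R ≤ topSum β R := by
  rw [topSum_eq_sum _ lt_sup_id_add_one, topSum_eq_sum _ lt_sup_id_add_one]
  gcongr

lemma lt_topSum_one {R : Finset ℕ} {r : ℕ} (hr : r ∈ R) : r < topSum 1 R := by
  rw [topSum_eq_sum 1 lt_sup_id_add_one]
  calc r < ∑ a ∈ Finset.range (r + 1), 1 := by simp
    _ ≤ ∑ a ∈ Finset.range (r + 1), min 1 (R.filter fun x => a ≤ x).card := by
      refine Finset.sum_le_sum fun a ha => le_min le_rfl (Finset.card_pos.2 ⟨r, ?_⟩)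
      exact Finset.mem_filter.2 ⟨hr, Nat.lt_succ_iff.1 (Finset.mem_range.1 ha)⟩
    _ ≤ _ := Finset.sum_le_sum_of_subset (Finset.range_subset_range.2 (lt_sup_id_add_one r hr))

lemma dick_eq (hb : 1 < b) (α k : ℕ) :
    dick b α k = min α (hamming b k) + dick b α (k / b) := by
  have hlt {n : ℕ} (hn : k ≤ n) (r : ℕ) (hr : r ∈ bsupp b k) : r < n + 1 := by
    have := Finset.mem_range.1 (Finset.mem_filter.1 hr).1
    omega
  have hlt' (r : ℕ) (hr : r ∈ bsupp b (k / b)) : r < k + 1 := by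
    have := Finset.mem_range.1 (Finset.mem_filter.1 hr).1
    have := Nat.div_le_self k b
    omega
  have hshift (a : ℕ) : (bsupp b k).filter (fun r => a + 1 ≤ r) =
      ((bsupp b (k / b)).filter fun r => a ≤ r).image Nat.succ := by
    ext r
    cases r <;> simp [mem_bsupp hb, bdigit_succ]
  change topSum α (bsupp b k) = min α (bsupp b k).card + topSum α (bsupp b (k / b))
  rw [topSum_eq_sum α (hlt (Nat.le_succ k)), Finset.sum_range_succ', topSum_eq_sum α hlt', add_comm]
  simp only [hshift, Finset.card_image_of_injective _ Nat.succ_injective, zero_le,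
    Finset.filter_true]

lemma lt_pow_dick_one (hb : 1 < b) (k : ℕ) : k < b ^ dick b 1 k := by
  have hdigit (i : ℕ) : bdigit b (k / b ^ dick b 1 k) i = bdigit b 0 i := by
    rw [← bdigit_add, bdigit_zero_left]
    by_contra h
    exact absurd (lt_topSum_one ((mem_bsupp hb).2 h)) (Nat.le_add_left _ i).not_gt
  have hquot := eq_of_bdigit_eq (Nat.lt_pow_self hb) (by positivity) fun i _ => hdigit i
  exact (Nat.div_eq_zero_iff.1 hquot).resolve_left (by positivity)

/-- The closure of `S` under subtracting `β`. For the positions of the nonzero digits of `k` it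
consists, in each residue class modulo `β` (one for each component before interlacing), of all
positions up to the leading one. -/
def modLower (β : ℕ) (S : Finset ℕ) : Finset ℕ :=
  (Finset.range (S.sup id + 1)).filter fun r => ∃ a ∈ S, r ≤ a ∧ r ≡ a [MOD β]

lemma mem_modLower {β : ℕ} {S : Finset ℕ} {r : ℕ} :
    r ∈ modLower β S ↔ ∃ a ∈ S, r ≤ a ∧ r ≡ a [MOD β] := by
  refine ⟨fun h => (Finset.mem_filter.1 h).2, fun h => Finset.mem_filter.2 ⟨?_, h⟩⟩
  obtain ⟨a, ha, hra, -⟩ := h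
  exact Finset.mem_range.2 (hra.trans_lt (lt_sup_id_add_one a ha))

lemma subset_modLower (β : ℕ) (S : Finset ℕ) : S ⊆ modLower β S := fun r hr =>
  mem_modLower.2 ⟨r, hr, le_rfl, rfl⟩

lemma card_modLower_window_le (β a : ℕ) (S : Finset ℕ) :
    ((modLower β S).filter fun r => a ≤ r ∧ r < a + β).card ≤
      min β (S.filter fun r => a ≤ r).card := by
  refine le_min ?_ ?_
  · refine (Finset.card_le_card (t := Finset.Ico a (a + β)) fun r hr => ?_).trans (by simp)
    simpa using (Finset.mem_filter.1 hr).2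
  have hlift : ∀ r ∈ (modLower β S).filter fun r => a ≤ r ∧ r < a + β,
      ∃ r' ∈ S.filter fun r => a ≤ r, r ≡ r' [MOD β] := by
    intro r hr
    obtain ⟨hr, har, -⟩ := Finset.mem_filter.1 hr
    obtain ⟨r', hr', hle, hmod⟩ := mem_modLower.1 hr
    exact ⟨r', Finset.mem_filter.2 ⟨hr', har.trans hle⟩, hmod⟩
  choose! f hf hmod using hlift
  refine Finset.card_le_card_of_injOn f hf fun x hx y hy hxy => ?_
  have hxy_mod : x ≡ y [MOD β] := (hmod x hx).trans (hxy ▸ (hmod y hy).symm)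
  obtain ⟨hax, hxa⟩ := (Finset.mem_filter.1 hx).2
  obtain ⟨hay, hya⟩ := (Finset.mem_filter.1 hy).2
  refine Nat.ModEq.eq_of_abs_lt hxy_mod ?_
  rw [abs_lt]
  omega

/- Up to boundary effects, every element of the closure lies in exactly `β` of the windows
`[a, a + β)`. -/
lemma mul_card_modLower_le (β : ℕ) (S : Finset ℕ) :
    β * (modLower β S).card ≤ topSum β S + β * β := by
  set T := modLower β S
  set n := S.sup id + 1
  have hcover : ∀ r ∈ T, β ≤ ((Finset.range n).filter fun a => a ≤ r ∧ r < a + β).card +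
      if r < β then β else 0 := by
    intro r hr
    split_ifs with h
    · omega
    have hrn : r < n := Finset.mem_range.1 (Finset.mem_filter.1 hr).1
    have hwindow : Finset.Ioc (r - β) r ⊆
        (Finset.range n).filter fun a => a ≤ r ∧ r < a + β := by
      intro a ha
      simp only [Finset.mem_Ioc, Finset.mem_filter, Finset.mem_range] at ha ⊢
      omega
    calc β = (Finset.Ioc (r - β) r).card := by rw [Nat.card_Ioc]; omega
      _ ≤ _ := Finset.card_le_card hwindow
  have hboundary : ∑ r ∈ T, (if r < β then β else 0) ≤ β * β := by
    rw [← Finset.sum_filter, Finset.sum_const, smul_eq_mul]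
    refine Nat.mul_le_mul_right _ ?_
    refine (Finset.card_le_card (t := Finset.range β) fun r hr => ?_).trans (by simp)
    simpa using (Finset.mem_filter.1 hr).2
  calc β * T.card = ∑ _r ∈ T, β := by rw [Finset.sum_const, smul_eq_mul, mul_comm]
    _ ≤ ∑ r ∈ T, ((Finset.range n).filter fun a => a ≤ r ∧ r < a + β).card + β * β := by
      refine (Finset.sum_le_sum hcover).trans ?_
      rw [Finset.sum_add_distrib]
      gcongr
    _ = ∑ a ∈ Finset.range n, (T.filter fun r => a ≤ r ∧ r < a + β).card + β * β := by
      simp_rw [Finset.card_filter]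
      rw [Finset.sum_comm]
    _ ≤ topSum β S + β * β := by
      rw [topSum_eq_sum β lt_sup_id_add_one]
      gcongr
      exact card_modLower_window_le β _ S

end Digits

/-! ### Dual nets -/

section DualNet

variable {b s n m : ℕ} {C : Fin s → Matrix (Fin n) (Fin m) (ZMod b)} {k l : Fin s → ℕ}

lemma zero_mem_dualNet (hb : 0 < b) (C : Fin s → Matrix (Fin n) (Fin m) (ZMod b)) :
    0 ∈ dualNet b C := by
  have htrv : trv b n 0 = 0 := by
    funext i
    simp [trv, bdigit_zero_left]
  refine ⟨fun j => by simpa using Nat.pow_pos hb, ?_⟩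
  simp [htrv]

lemma finite_dualNet (C : Fin s → Matrix (Fin n) (Fin m) (ZMod b)) : (dualNet b C).Finite :=
  (Set.Finite.pi' fun _ => Set.finite_Iio (b ^ n)).subset fun _ hk => hk.1

lemma sum_bdigit_smul_row_eq_zero (hk : k ∈ dualNet b C) :
    ∑ j, ∑ i : Fin n, (bdigit b (k j) i : ZMod b) • C j i = 0 := by
  rw [← hk.2]
  refine Finset.sum_congr rfl fun j _ => ?_
  funext v
  simp [Matrix.mulVec, dotProduct, trv, mul_comm]

/- The difference of the digit vectors is a linear relation between the rows in `R`. -/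
lemma eq_of_linearIndependent_rows (hb : 0 < b) (hk : k ∈ dualNet b C) (hl : l ∈ dualNet b C)
    {R : Fin s → Finset (Fin n)} (hR : ∀ j i, bdigit b (k j) i.1 ≠ bdigit b (l j) i.1 → i ∈ R j)
    (hind : LinearIndependent (ZMod b) fun p : Σ j : Fin s, {i : Fin n // i ∈ R j} =>
      C p.1 p.2.1) : k = l := by
  have hrelation : ∑ p : Σ j : Fin s, {i : Fin n // i ∈ R j},
      ((bdigit b (k p.1) p.2.1 : ZMod b) - bdigit b (l p.1) p.2.1) • C p.1 p.2.1 = 0 := by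
    rw [← sub_self (0 : Fin m → ZMod b), ← sum_bdigit_smul_row_eq_zero hk]
    nth_rewrite 2 [sum_bdigit_smul_row_eq_zero hk]
    rw [← sum_bdigit_smul_row_eq_zero hl, ← Finset.sum_sub_distrib, Fintype.sum_sigma]
    refine Finset.sum_congr rfl fun j _ => ?_
    simp_rw [← Finset.sum_sub_distrib, ← sub_smul]
    rw [Finset.sum_coe_sort (R j) fun i =>
      ((bdigit b (k j) i : ZMod b) - bdigit b (l j) i) • C j i]
    refine Finset.sum_subset (Finset.subset_univ _) fun i _ hi => ?_
    rw [not_imp_comm.1 (hR j i) hi, sub_self, zero_smul]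
  funext j
  refine eq_of_bdigit_eq (hk.1 j) (hl.1 j) fun i hi => ?_
  by_contra hne
  have hcast := Fintype.linearIndependent_iff.1 hind _ hrelation ⟨j, ⟨i, hi⟩, hR j ⟨i, hi⟩ hne⟩
  rw [sub_eq_zero, ZMod.natCast_eq_natCast_iff] at hcast
  exact hne (hcast.eq_of_lt_of_lt (bdigit_lt hb _ _) (bdigit_lt hb _ _))

lemma mul_lt_dickVec_add (hb : 1 < b) {α t : ℕ} (hC : isOrderNet b α t m C)
    (hk : k ∈ dualNet b C) (hk0 : k ≠ 0) : α * m < dickVec b α k + t := by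
  by_contra! hle
  let R : Fin s → Finset (Fin n) := fun j => Finset.univ.filter fun i => i.1 ∈ bsupp b (k j)
  have hR (j : Fin s) : (R j).image Fin.val = bsupp b (k j) := by
    ext i
    simp only [R, Finset.mem_image, Finset.mem_filter, Finset.mem_univ, true_and]
    refine ⟨fun ⟨_, hi', h⟩ => h ▸ hi', fun hi => ⟨⟨i, ?_⟩, hi, rfl⟩⟩
    by_contra! hni
    exact (mem_bsupp hb).1 hi
      (bdigit_eq_zero_of_lt ((hk.1 j).trans_le (Nat.pow_le_pow_right hb.le hni)))
  have hsum : ∑ j, topSum α ((R j).image Fin.val) ≤ α * m - t := by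
    simp_rw [hR]
    exact Nat.le_sub_of_add_le hle
  refine hk0 (eq_of_linearIndependent_rows hb.le hk (zero_mem_dualNet hb.le C) (fun j i hi => ?_)
    (hC R hsum))
  rw [Pi.zero_apply, bdigit_zero_left] at hi
  exact Finset.mem_filter.2 ⟨Finset.mem_univ _, (mem_bsupp hb).2 hi⟩

lemma eq_of_div_pow_eq (hb : 0 < b) (hC : isOrderNet b 1 0 m C) (hk : k ∈ dualNet b C)
    (hl : l ∈ dualNet b C) {a : Fin s → ℕ} (ha : ∑ j, a j ≤ m)
    (h : ∀ j, k j / b ^ a j = l j / b ^ a j) : k = l := by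
  let R : Fin s → Finset (Fin n) := fun j => Finset.univ.filter fun i => i.1 < a j
  have hsum : ∑ j, topSum 1 ((R j).image Fin.val) ≤ 1 * m - 0 := by
    rw [one_mul, Nat.sub_zero]
    exact (Finset.sum_le_sum fun j _ => topSum_one_le (by simp [R])).trans ha
  refine eq_of_linearIndependent_rows hb hk hl (fun j i hi => ?_) (hC R hsum)
  refine Finset.mem_filter.2 ⟨Finset.mem_univ _, ?_⟩
  by_contra! hle
  rw [← Nat.sub_add_cancel hle, bdigit_add, bdigit_add, h] at hi
  exact hi rfl

lemma exists_le_sum_eq {ι : Type*} [Fintype ι] (a : ι → ℕ) {M : ℕ} (hM : M ≤ ∑ j, a j) :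
    ∃ a' : ι → ℕ, (∀ j, a' j ≤ a j) ∧ ∑ j, a' j = M := by
  classical
  induction M with
  | zero => exact ⟨0, fun _ => Nat.zero_le _, by simp⟩
  | succ M ih =>
    obtain ⟨a', hle, hsum⟩ := ih (by omega)
    obtain ⟨j, -, hj⟩ : ∃ j ∈ Finset.univ, a' j < a j := Finset.exists_lt_of_sum_lt (by omega)
    refine ⟨a' + Pi.single j 1, fun i => ?_, ?_⟩
    · rcases eq_or_ne i j with rfl | hij
      · simpa using hj
      · simpa [hij] using hle i
    · simp [Finset.sum_add_distrib, hsum]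

lemma card_dualNet_box_le (hb : 0 < b) (hC : isOrderNet b 1 0 m C) {K : Finset (Fin s → ℕ)}
    {a : Fin s → ℕ} (hK : ∀ k ∈ K, k ∈ dualNet b C) (hKa : ∀ k ∈ K, ∀ j, k j < b ^ a j)
    (ha : m ≤ ∑ j, a j) : K.card ≤ b ^ (∑ j, a j - m) := by
  obtain ⟨a', hle, hsum⟩ := exists_le_sum_eq a ha
  calc K.card ≤ (Fintype.piFinset fun j => Finset.range (b ^ (a j - a' j))).card := by
        refine Finset.card_le_card_of_injOn (fun k j => k j / b ^ a' j) (fun k hk => ?_) ?_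
        · refine Finset.mem_coe.2 (Fintype.mem_piFinset.2 fun j => Finset.mem_range.2 ?_)
          refine Nat.div_lt_of_lt_mul ?_
          rw [← pow_add, Nat.add_sub_cancel' (hle j)]
          exact hKa k hk j
        · intro k hk l hl hkl
          exact eq_of_div_pow_eq hb hC (hK k hk) (hK l hl) hsum.le (congrFun hkl)
    _ = b ^ (∑ j, a j - m) := by
        rw [Fintype.card_piFinset]
        simp_rw [Finset.card_range]
        rw [Finset.prod_pow_eq_pow_sum, Finset.sum_tsub_distrib _ fun j _ => hle j, hsum]

end DualNet

/-! ### The interlaced Chen–Skriganov nets -/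

section ChenSkriganov

variable {b s β g w : ℕ} {βe : ℕ → ℕ → ZMod b}

/-- The generating matrices of the interlaced Chen–Skriganov net of order `β` with `b ^ (g * w)`
points, where `βe j l` is the `l`-th parameter of the `j`-th component before interlacing. -/
abbrev csNet (b s β g w : ℕ) (βe : ℕ → ℕ → ZMod b) :
    Fin s → Matrix (Fin (β * (g * w))) (Fin (g * w)) (ZMod b) :=
  interlace β s (g * w) fun j => csMatrix b w (g * w) (βe j.1)

/-- The interpolation node of row `r` of the `j`-th interlaced Chen–Skriganov matrix. -/
def csNode (β w : ℕ) (βe : ℕ → ℕ → ZMod b) (j r : ℕ) : ZMod b := βe (β * j + r % β) (r / β / w)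

/-- The order of the Hasse derivative in row `r` of an interlaced Chen–Skriganov matrix. -/
def csOrder (β w r : ℕ) : ℕ := r / β % w

lemma csNet_row (j : Fin s) (r : Fin (β * (g * w))) :
    csNet b s β g w βe j r = hasseRow (csNode β w βe j r) (csOrder β w r) (g * w) := rfl

lemma csNode_csOrder_injective
    (hdist : Set.InjOn (Function.uncurry βe) (Set.Iio (β * s) ×ˢ Set.Iio g))
    {R : Fin s → Finset (Fin (β * (g * w)))} :
    Function.Injective fun p : Σ j : Fin s, {i : Fin (β * (g * w)) // i ∈ R j} =>
      (csNode β w βe p.1 p.2.1, csOrder β w p.2.1) := by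
  rintro ⟨⟨j, hj⟩, ⟨r, hr⟩, hrR⟩ ⟨⟨j', hj'⟩, ⟨r', hr'⟩, hrR'⟩ h
  obtain ⟨hnode, horder⟩ := Prod.mk.inj h
  have hβ : 0 < β := Nat.pos_of_mul_pos_right (hr.pos)
  have hrange {j r : ℕ} (hj : j < s) (hr : r < β * (g * w)) :
      (β * j + r % β, r / β / w) ∈ Set.Iio (β * s) ×ˢ Set.Iio g := by
    refine ⟨?_, Nat.div_lt_of_lt_mul (mul_comm g w ▸ Nat.div_lt_of_lt_mul hr)⟩
    calc β * j + r % β < β * j + β := Nat.add_lt_add_left (Nat.mod_lt _ hβ) _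
      _ ≤ β * s := by rw [← Nat.mul_succ]; exact Nat.mul_le_mul_left _ hj
  obtain ⟨hcomp, hblock⟩ := Prod.mk.inj (hdist (hrange hj hr) (hrange hj' hr') hnode)
  have hjj : j = j' := by
    simpa [Nat.mul_add_div hβ, Nat.div_eq_of_lt (Nat.mod_lt _ hβ)] using congrArg (· / β) hcomp
  subst hjj
  have hmod : r % β = r' % β := Nat.add_left_cancel hcomp
  have hdiv : r / β = r' / β := by
    rw [← Nat.div_add_mod (r / β) w, ← Nat.div_add_mod (r' / β) w, hblock]
    exact congrArg _ horder
  have hrr : r = r' := by rw [← Nat.div_add_mod r β, ← Nat.div_add_mod r' β, hdiv, hmod]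
  subst hrr
  rfl

lemma exists_csNode_eq_csOrder_eq (hβ : 0 < β) (hw : 0 < w) {r k : ℕ} (hk : k < csOrder β w r)
    (βe : ℕ → ℕ → ZMod b) (j : ℕ) :
    ∃ r' ≤ r, r' ≡ r [MOD β] ∧ csNode β w βe j r' = csNode β w βe j r ∧ csOrder β w r' = k := by
  have hkw : k < w := hk.trans (Nat.mod_lt _ hw)
  refine ⟨β * (w * (r / β / w) + k) + r % β, ?_, ?_, ?_, ?_⟩
  · calc β * (w * (r / β / w) + k) + r % β ≤ β * (w * (r / β / w) + r / β % w) + r % β := by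
          gcongr
          exact hk.le
      _ = r := by rw [Nat.div_add_mod, Nat.div_add_mod]
  · simp [Nat.ModEq]
  · simp only [csNode, Nat.mul_add_mod, Nat.mod_mod, Nat.mul_add_div hβ, Nat.mod_div_self, add_zero,
      Nat.mul_add_div hw, Nat.div_eq_of_lt hkw]
  · simp only [csOrder, Nat.mul_add_div hβ, Nat.mod_div_self, add_zero, Nat.mul_add_mod,
      Nat.mod_eq_of_lt hkw]

variable [Fact b.Prime]

lemma linearIndependent_csNet_of_card_le
    (hdist : Set.InjOn (Function.uncurry βe) (Set.Iio (β * s) ×ˢ Set.Iio g)) (hw : 0 < w)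
    {R : Fin s → Finset (Fin (β * (g * w)))} (hR : ∑ j, (R j).card ≤ g) :
    LinearIndependent (ZMod b) fun p : Σ j : Fin s, {i : Fin (β * (g * w)) // i ∈ R j} =>
      csNet b s β g w βe p.1 p.2.1 := by
  simp_rw [csNet_row]
  refine linearIndependent_hasseRow_of_lt (csNode_csOrder_injective hdist)
    (fun p => Nat.mod_lt _ hw) (Nat.mul_le_mul_right _ ?_)
  simpa using hR

/- Before interlacing, the rows in `S` form initial segments of the matrices, so that every node
occurs with all orders below its multiplicity. -/
lemma linearIndependent_csNet_of_initial
    (hdist : Set.InjOn (Function.uncurry βe) (Set.Iio (β * s) ×ˢ Set.Iio g))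
    {R : Fin s → Finset (Fin (β * (g * w)))} {S : Fin s → Finset ℕ}
    (hRS : ∀ j, ∀ r ∈ R j, r.1 ∈ S j)
    (hS : ∀ j, ∀ a ∈ S j, ∀ r ≤ a, r ≡ a [MOD β] → r ∈ S j) (hcard : ∑ j, (S j).card ≤ g * w) :
    LinearIndependent (ZMod b) fun p : Σ j : Fin s, {i : Fin (β * (g * w)) // i ∈ R j} =>
      csNet b s β g w βe p.1 p.2.1 := by
  let R' : Fin s → Finset (Fin (β * (g * w))) := fun j => Finset.univ.filter fun r => r.1 ∈ S j
  have hR' : LinearIndependent (ZMod b) fun p : Σ j : Fin s, {i // i ∈ R' j} =>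
      csNet b s β g w βe p.1 p.2.1 := by
    simp_rw [csNet_row]
    refine linearIndependent_hasseRow_of_initial (csNode_csOrder_injective hdist) ?_ ?_
    · rintro ⟨j, r, hr⟩ k hk
      have hβ : 0 < β := Nat.pos_of_mul_pos_right r.pos
      have hw : 0 < w := Nat.pos_of_mul_pos_left (Nat.pos_of_mul_pos_left r.pos)
      obtain ⟨r', hle, hmod, hnode, horder⟩ := exists_csNode_eq_csOrder_eq hβ hw hk βe j
      exact ⟨⟨j, ⟨r', hle.trans_lt r.2⟩, Finset.mem_filter.2
        ⟨Finset.mem_univ _, hS j r (Finset.mem_filter.1 hr).2 r' hle hmod⟩⟩, hnode, horder⟩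
    · rw [Fintype.card_sigma]
      simp_rw [Fintype.card_coe]
      refine (Finset.sum_le_sum fun j _ => ?_).trans hcard
      exact Finset.card_le_card_of_injOn Fin.val (fun r hr => (Finset.mem_filter.1 hr).2)
        Fin.val_injective.injOn
  have hsub (j : Fin s) (r : Fin (β * (g * w))) (hr : r ∈ R j) : r ∈ R' j :=
    Finset.mem_filter.2 ⟨Finset.mem_univ _, hRS j r hr⟩
  exact hR'.comp (Sigma.map id fun j => Subtype.map id (hsub j))
    (Function.injective_id.sigma_map fun j => Subtype.map_injective _ Function.injective_id)

theorem isOrderNet_csNet_one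
    (hdist : Set.InjOn (Function.uncurry βe) (Set.Iio (β * s) ×ˢ Set.Iio g)) :
    isOrderNet b 1 0 (g * w) (csNet b s β g w βe) := by
  intro R hR
  rw [one_mul, Nat.sub_zero] at hR
  refine linearIndependent_csNet_of_initial hdist
    (S := fun j => Finset.range (topSum 1 ((R j).image Fin.val))) (fun j r hr => ?_)
    (fun j a ha r hra _ => ?_) (by simpa using hR)
  · exact Finset.mem_range.2 (lt_topSum_one (Finset.mem_image_of_mem _ hr))
  · exact Finset.mem_range.2 (hra.trans_lt (Finset.mem_range.1 ha))

theorem isOrderNet_csNet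
    (hdist : Set.InjOn (Function.uncurry βe) (Set.Iio (β * s) ×ˢ Set.Iio g)) (hβ : 0 < β) :
    isOrderNet b β (s * (β * β)) (g * w) (csNet b s β g w βe) := by
  intro R hR
  set T : Fin s → Finset ℕ := fun j => (R j).image Fin.val
  refine linearIndependent_csNet_of_initial hdist (S := fun j => modLower β (T j))
    (fun j r hr => subset_modLower β _ (Finset.mem_image_of_mem _ hr)) (fun j a ha r hra hmod => ?_)
    ?_
  · obtain ⟨c, hc, hac, hac_mod⟩ := mem_modLower.1 ha
    exact mem_modLower.2 ⟨c, hc, hra.trans hac, hmod.trans hac_mod⟩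
  rcases le_total (s * (β * β)) (β * (g * w)) with hle | hle
  · refine Nat.le_of_mul_le_mul_left ?_ hβ
    calc β * ∑ j, (modLower β (T j)).card ≤ ∑ j, (topSum β (T j) + β * β) := by
          rw [Finset.mul_sum]
          exact Finset.sum_le_sum fun j _ => mul_card_modLower_le β _
      _ = ∑ j, topSum β (T j) + s * (β * β) := by simp [Finset.sum_add_distrib]
      _ ≤ β * (g * w) := Nat.add_le_of_le_sub hle hR
  · have hzero : ∑ j, topSum β (T j) = 0 := Nat.le_zero.1 (hR.trans_eq (Nat.sub_eq_zero_of_le hle))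
    have hempty (j : Fin s) : T j = ∅ := by
      refine Finset.eq_empty_of_forall_notMem fun r hr => ?_
      have hpos := (lt_topSum_one hr).trans_le (topSum_mono hβ _)
      exact hpos.not_ge ((Finset.sum_eq_zero_iff.1 hzero j (Finset.mem_univ j)).trans_le r.zero_le)
    simp [hempty, modLower]

lemma eq_of_sum_digitDist_le
    (hdist : Set.InjOn (Function.uncurry βe) (Set.Iio (β * s) ×ˢ Set.Iio g)) (hw : 0 < w)
    {k l : Fin s → ℕ} (hk : k ∈ dualNet b (csNet b s β g w βe))
    (hl : l ∈ dualNet b (csNet b s β g w βe)) (h : ∑ j, digitDist b (k j) (l j) ≤ g) : k = l := by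
  have hb : b.Prime := Fact.out
  refine eq_of_linearIndependent_rows hb.pos hk hl
    (R := fun j => Finset.univ.filter fun i => i.1 ∈ bdiff b (k j) (l j)) (fun j i hi => ?_)
    (linearIndependent_csNet_of_card_le hdist hw ((Finset.sum_le_sum fun j _ => ?_).trans h))
  · exact Finset.mem_filter.2 ⟨Finset.mem_univ _, (mem_bdiff hb.one_lt).2 hi⟩
  · exact Finset.card_le_card_of_injOn Fin.val (fun i hi => (Finset.mem_filter.1 hi).2)
      Fin.val_injective.injOn

end ChenSkriganov

/-! ### Summation over the dual net -/

section Summation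

lemma card_le_of_sum_eq {s N : ℕ} {I : Finset (Fin s → ℕ)} (hI : ∀ a ∈ I, ∑ j, a j = N) :
    I.card ≤ (N + 1) ^ (s - 1) := by
  rcases s with _ | s
  · simpa using Finset.card_le_one_of_subsingleton I
  calc I.card ≤ (Fintype.piFinset fun _ : Fin s => Finset.range (N + 1)).card := by
        refine Finset.card_le_card_of_injOn Fin.tail (fun a ha => ?_) fun a ha a' ha' h => ?_
        · refine Fintype.mem_piFinset.2 fun j => Finset.mem_range_succ_iff.2 ?_
          exact hI a ha ▸ Finset.single_le_sum_of_canonicallyOrdered (Finset.mem_univ j.succ)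
        · have hsum : ∑ j, a j = ∑ j, a' j := (hI a ha).trans (hI a' ha').symm
          have htail : ∀ j : Fin s, a j.succ = a' j.succ := congrFun h
          simp only [Fin.sum_univ_succ, htail, add_left_inj] at hsum
          exact funext (Fin.cases hsum htail)
    _ = (N + 1) ^ s := by simp

lemma summable_succ_pow_mul_geometric (t : ℕ) {ρ : ℝ} (hρ₀ : 0 < ρ) (hρ₁ : ρ < 1) :
    Summable fun z : ℕ => ((z : ℝ) + 1) ^ t * ρ ^ z := by
  have hpow : Summable fun z : ℕ => (z : ℝ) ^ t * ρ ^ z :=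
    summable_pow_mul_geometric_of_norm_lt_one t (by rwa [Real.norm_of_nonneg hρ₀.le])
  refine (((summable_nat_add_iff 1).2 hpow).mul_left ρ⁻¹).congr fun z => ?_
  push_cast
  rw [pow_succ]
  field_simp

/-- The factor `(m + 1) ^ (s - 1)` is the source of the logarithm in the final bound. -/
lemma sum_pow_excess_le {s m : ℕ} {ρ : ℝ} (hρ₀ : 0 < ρ) (hρ₁ : ρ < 1)
    {I : Finset (Fin s → ℕ)} (hI : ∀ a ∈ I, m ≤ ∑ j, a j) :
    ∑ a ∈ I, ρ ^ (∑ j, a j - m) ≤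
      ((m : ℝ) + 1) ^ (s - 1) * ∑' z : ℕ, ((z : ℝ) + 1) ^ (s - 1) * ρ ^ z := by
  classical
  let excess (a : Fin s → ℕ) : ℕ := ∑ j, a j - m
  have hfiber (z : ℕ) : (I.filter (excess · = z)).card • ρ ^ z ≤
      ((m : ℝ) + 1) ^ (s - 1) * (((z : ℝ) + 1) ^ (s - 1) * ρ ^ z) := by
    have hcard : (I.filter (excess · = z)).card ≤ (m + z + 1) ^ (s - 1) :=
      card_le_of_sum_eq fun a ha => by
        obtain ⟨haI, rfl⟩ := Finset.mem_filter.1 ha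
        exact (Nat.add_sub_cancel' (hI a haI)).symm
    have hle : (m + z + 1) ^ (s - 1) ≤ ((m + 1) * (z + 1)) ^ (s - 1) :=
      Nat.pow_le_pow_left (by nlinarith) _
    rw [nsmul_eq_mul, ← mul_assoc, ← mul_pow]
    gcongr
    exact_mod_cast hcard.trans hle
  calc ∑ a ∈ I, ρ ^ excess a
      = ∑ z ∈ I.image excess, (I.filter (excess · = z)).card • ρ ^ z :=
        Finset.sum_comp (ρ ^ ·) excess
    _ ≤ ((m : ℝ) + 1) ^ (s - 1) * ∑ z ∈ I.image excess, ((z : ℝ) + 1) ^ (s - 1) * ρ ^ z := by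
        rw [Finset.mul_sum]
        exact Finset.sum_le_sum fun z _ => hfiber z
    _ ≤ _ := by
        gcongr
        exact (summable_succ_pow_mul_geometric _ hρ₀ hρ₁).sum_le_tsum _ fun z _ => by positivity

variable {b s α β m n t : ℕ}

lemma dickVec_concave (hα : 0 < α) (hβ : α ≤ β) (k : Fin s → ℕ) :
    (α - 1) * dickVec b β k + (β - α) * dickVec b 1 k ≤ (β - 1) * dickVec b α k := by
  simp only [dickVec, Finset.mul_sum, ← Finset.sum_add_distrib]
  refine Finset.sum_le_sum fun j _ => ?_
  have h := topSum_concave (α - 1) (β - α) (bsupp b (k j))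
  rwa [show α - 1 + (β - α) + 1 = β by omega, show α - 1 + (β - α) = β - 1 by omega,
    Nat.sub_add_cancel hα] at h

/-- Since `β ≥ 2α`, the excess `z = μ_1(k) - m` enters `2 μ_α(k)` with a factor greater than `1`,
which beats the number `b ^ z` of dual elements with that excess. -/
lemma excess_le_two_mul_dickVec (hα : 0 < α) (hβ : 2 * α ≤ β) {k : Fin s → ℕ}
    (hk₁ : m ≤ dickVec b 1 k) (hkβ : β * m ≤ dickVec b β k + t) :
    (2 * α * m : ℝ) + (1 + 1 / (β - 1)) * (dickVec b 1 k - m : ℕ) ≤ 2 * dickVec b α k + 2 * t := by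
  obtain ⟨z, hz⟩ := Nat.exists_eq_add_of_le hk₁
  have hconc := dickVec_concave (b := b) hα (by omega : α ≤ β) k
  rw [hz] at hconc ⊢
  rw [Nat.add_sub_cancel_left]
  have hα' : (0 : ℝ) ≤ α - 1 := sub_nonneg.2 (by exact_mod_cast hα)
  have hβ' : (0 : ℝ) ≤ β - 2 * α := sub_nonneg.2 (by exact_mod_cast hβ)
  have hβ₁ : (0 : ℝ) < β - 1 := by linarith
  have hconc' : ((α : ℝ) - 1) * dickVec b β k + (β - α) * (m + z) ≤ (β - 1) * dickVec b α k := by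
    have := (Nat.cast_le (α := ℝ)).2 hconc
    push_cast [Nat.cast_sub hα, Nat.cast_sub (by omega : α ≤ β),
      Nat.cast_sub (by omega : 1 ≤ β)] at this
    simpa using this
  have hkβ' : (β : ℝ) * m ≤ dickVec b β k + t := by exact_mod_cast hkβ
  refine le_of_mul_le_mul_left ?_ hβ₁
  have hexpand : ((β : ℝ) - 1) * (2 * α * m + (1 + 1 / (β - 1)) * z) =
      (β - 1) * (2 * α * m) + β * z := by
    field_simp
    ring
  rw [hexpand]
  nlinarith [mul_le_mul_of_nonneg_left hkβ' hα', mul_nonneg z.cast_nonneg hβ',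
    mul_nonneg t.cast_nonneg (by linarith : (0 : ℝ) ≤ β - α)]

/-- The ratio `b ^ (-1 / (β - 1))` of the geometric series that remains after the `b ^ z` dual
elements of excess `z` have been counted. -/
noncomputable def excessRatio (b β : ℕ) : ℝ := (b : ℝ) ^ (-(1 / ((β : ℝ) - 1)))

lemma excessRatio_pos (hb : 1 < b) : 0 < excessRatio b β :=
  Real.rpow_pos_of_pos (by exact_mod_cast hb.le) _

lemma excessRatio_lt_one (hb : 1 < b) (hβ : 1 < β) : excessRatio b β < 1 := by
  refine Real.rpow_lt_one_of_one_lt_of_neg (by exact_mod_cast hb) (neg_lt_zero.2 ?_)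
  have : (1 : ℝ) < β := by exact_mod_cast hβ
  exact one_div_pos.2 (by linarith)

lemma inv_pow_dickVec_le (hb : 1 < b) (hα : 0 < α) (hβ : 2 * α ≤ β) {k : Fin s → ℕ}
    (hk₁ : m ≤ dickVec b 1 k) (hkβ : β * m ≤ dickVec b β k + t) :
    ((b : ℝ) ^ (2 * dickVec b α k))⁻¹ ≤ (b : ℝ) ^ (2 * t) / ((b : ℝ) ^ m) ^ (2 * α) *
      (((b : ℝ) ^ (dickVec b 1 k - m))⁻¹ * excessRatio b β ^ (dickVec b 1 k - m)) := by
  have hb₀ : (0 : ℝ) < b := by exact_mod_cast hb.le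
  have h := excess_le_two_mul_dickVec hα hβ hk₁ hkβ
  rw [excessRatio, div_eq_mul_inv, ← pow_mul]
  simp only [← Real.rpow_natCast, ← Real.rpow_neg hb₀.le, ← Real.rpow_mul hb₀.le,
    ← Real.rpow_add hb₀]
  refine Real.rpow_le_rpow_of_exponent_le (Nat.one_le_cast.2 hb.le) ?_
  push_cast
  linarith

lemma sum_excess_le (hb : 1 < b) {ρ : ℝ} (hρ₀ : 0 < ρ) (hρ₁ : ρ < 1)
    {C : Fin s → Matrix (Fin n) (Fin m) (ZMod b)} (hC : isOrderNet b 1 0 m C)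
    {K : Finset (Fin s → ℕ)} (hK : ∀ k ∈ K, k ∈ dualNet b C) (hKm : ∀ k ∈ K, m ≤ dickVec b 1 k) :
    ∑ k ∈ K, (((b : ℝ) ^ (dickVec b 1 k - m))⁻¹ * ρ ^ (dickVec b 1 k - m)) ≤
      ((m : ℝ) + 1) ^ (s - 1) * ∑' z : ℕ, ((z : ℝ) + 1) ^ (s - 1) * ρ ^ z := by
  classical
  let a (k : Fin s → ℕ) (j : Fin s) : ℕ := dick b 1 (k j)
  have ha : ∀ x ∈ K.image a, m ≤ ∑ j, x j := Finset.forall_mem_image.2 hKm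
  have hfiber : ∀ x ∈ K.image a, ∑ k ∈ K.filter (a · = x),
      (((b : ℝ) ^ (dickVec b 1 k - m))⁻¹ * ρ ^ (dickVec b 1 k - m)) ≤ ρ ^ (∑ j, x j - m) := by
    intro x hx
    have hcard : ((K.filter (a · = x)).card : ℝ) ≤ (b : ℝ) ^ (∑ j, x j - m) := by
      exact_mod_cast card_dualNet_box_le (K := K.filter (a · = x)) (by omega) hC
        (fun k hk => hK k (Finset.mem_filter.1 hk).1)
        (fun k hk j => (Finset.mem_filter.1 hk).2 ▸ lt_pow_dick_one hb (k j)) (ha x hx)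
    have hconst : ∀ k ∈ K.filter (a · = x), dickVec b 1 k = ∑ j, x j :=
      fun k hk => (Finset.mem_filter.1 hk).2 ▸ rfl
    rw [Finset.sum_congr rfl fun k hk => by rw [hconst k hk], Finset.sum_const, nsmul_eq_mul,
      ← mul_assoc]
    exact mul_le_of_le_one_left (by positivity) (mul_inv_le_one_of_le₀ hcard (by positivity))
  rw [← Finset.sum_fiberwise_of_maps_to (g := a) fun k hk => Finset.mem_image_of_mem a hk]
  exact (Finset.sum_le_sum hfiber).trans (sum_pow_excess_le hρ₀ hρ₁ ha)

lemma succ_pow_le_log_pow (hb : 1 < b) (hm : 0 < m) (r : ℕ) :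
    ((m : ℝ) + 1) ^ r ≤ (2 / Real.log b) ^ r * Real.log ((b : ℝ) ^ m) ^ r := by
  have hlog : Real.log b ≠ 0 := (Real.log_pos (by exact_mod_cast hb)).ne'
  have hm' : (1 : ℝ) ≤ m := by exact_mod_cast hm
  rw [Real.log_pow, ← mul_pow, show 2 / Real.log b * (m * Real.log b) = 2 * m by field_simp]
  gcongr
  linarith

theorem exists_sum_dualNet_le (hb : 1 < b) (s t : ℕ) (hα : 0 < α) (hβ : 2 * α ≤ β) :
    ∃ A : ℝ, 0 < A ∧ ∀ {n m : ℕ} {C : Fin s → Matrix (Fin n) (Fin m) (ZMod b)}, 0 < m →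
      isOrderNet b 1 0 m C → isOrderNet b β t m C →
      ∀ K : Finset (Fin s → ℕ), (∀ k ∈ K, k ∈ dualNet b C ∧ k ≠ 0) →
      ∑ k ∈ K, ((b : ℝ) ^ (2 * dickVec b α k))⁻¹ ≤
        A * Real.log ((b : ℝ) ^ m) ^ (s - 1) / ((b : ℝ) ^ m) ^ (2 * α) := by
  have hρ₀ : 0 < excessRatio b β := excessRatio_pos hb
  have hρ₁ : excessRatio b β < 1 := excessRatio_lt_one hb (by omega)
  have hlog : 0 < Real.log b := Real.log_pos (by exact_mod_cast hb)
  set T : ℝ := ∑' z : ℕ, ((z : ℝ) + 1) ^ (s - 1) * excessRatio b β ^ z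
  have hT : 0 < T := (summable_succ_pow_mul_geometric _ hρ₀ hρ₁).tsum_pos
    (fun z => by positivity) 0 (by simp)
  refine ⟨b ^ (2 * t) * ((2 / Real.log b) ^ (s - 1) * T), by positivity,
    fun {n m C} hm hC₁ hCβ K hK => ?_⟩
  have hK₁ : ∀ k ∈ K, m ≤ dickVec b 1 k := fun k hk => by
    simpa using (mul_lt_dickVec_add hb hC₁ (hK k hk).1 (hK k hk).2).le
  calc ∑ k ∈ K, ((b : ℝ) ^ (2 * dickVec b α k))⁻¹
      ≤ ∑ k ∈ K, b ^ (2 * t) / (b ^ m) ^ (2 * α) *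
          (((b : ℝ) ^ (dickVec b 1 k - m))⁻¹ * excessRatio b β ^ (dickVec b 1 k - m)) :=
        Finset.sum_le_sum fun k hk => inv_pow_dickVec_le hb hα hβ (hK₁ k hk)
          (mul_lt_dickVec_add hb hCβ (hK k hk).1 (hK k hk).2).le
    _ ≤ b ^ (2 * t) / (b ^ m) ^ (2 * α) * (((m : ℝ) + 1) ^ (s - 1) * T) := by
        rw [← Finset.mul_sum]
        gcongr
        exact sum_excess_le hb hρ₀ hρ₁ hC₁ (fun k hk => (hK k hk).1) hK₁
    _ ≤ b ^ (2 * t) / (b ^ m) ^ (2 * α) *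
          ((2 / Real.log b) ^ (s - 1) * Real.log ((b : ℝ) ^ m) ^ (s - 1) * T) := by
        gcongr
        exact succ_pow_le_log_pow hb hm _
    _ = _ := by ring

end Summation

/-! ### Walsh coefficients -/

open ComplexConjugate Asymptotics

section Walsh

variable {b : ℕ}

/-- The primitive `b`-th root of unity `ω_b = exp(2πi/b)`. -/
noncomputable def walshRoot (b : ℕ) : ℂ := Complex.exp (2 * (Real.pi : ℂ) * Complex.I / (b : ℂ))

lemma norm_walshRoot (hb : b ≠ 0) : ‖walshRoot b‖ = 1 :=
  (Complex.isPrimitiveRoot_exp b hb).norm'_eq_one hb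

lemma walsh_eq_zpow (hb : 1 < b) {k n : ℕ} (hk : k < n) (x : ℝ) :
    walsh b k x = walshRoot b ^ ∑ a ∈ Finset.range n, (bdigit b k a : ℤ) * rdigit b x (a + 1) := by
  have hext : ∑ a ∈ Finset.range (k + 1), (bdigit b k a : ℤ) * rdigit b x (a + 1) =
      ∑ a ∈ Finset.range n, (bdigit b k a : ℤ) * rdigit b x (a + 1) := by
    refine Finset.sum_subset (Finset.range_subset_range.2 hk) fun a _ ha => ?_
    have hka : k < b ^ a := (by simpa using ha : k < a).trans (Nat.lt_pow_self hb)
    rw [bdigit_eq_zero_of_lt hka, Nat.cast_zero, zero_mul]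
  rw [walsh, walshRoot, ← Complex.exp_int_mul, ← hext, mul_comm]
  push_cast
  rfl

lemma norm_walsh (hb : 1 < b) (k : ℕ) (x : ℝ) : ‖walsh b k x‖ = 1 := by
  rw [walsh_eq_zpow hb k.lt_succ_self, norm_zpow, norm_walshRoot (by omega), one_zpow]

lemma measurable_walsh (b k : ℕ) : Measurable (walsh b k) := by
  have hdigit (i : ℕ) : Measurable fun x : ℝ => ((rdigit b x i : ℤ) : ℂ) :=
    (Measurable.of_discrete (f := fun z : ℤ => ((z % b : ℤ) : ℂ))).comp
      (Int.measurable_floor.comp (measurable_id.mul_const _))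
  exact Complex.measurable_exp.comp
    ((Finset.measurable_sum _ fun a _ => (hdigit (a + 1)).const_mul _).const_mul _)

lemma rdigit_one_add_div {i : ℕ} (hi : i < b) {x : ℝ} (hx : x ∈ Set.Ico (0 : ℝ) 1) :
    rdigit b ((i + x) / b) 1 = i := by
  have hb : (b : ℝ) ≠ 0 := by exact_mod_cast (by omega : b ≠ 0)
  rw [rdigit, pow_one, div_mul_cancel₀ _ hb, Int.floor_natCast_add, Int.floor_eq_zero_iff.2 hx,
    add_zero]
  exact_mod_cast Nat.mod_eq_of_lt hi

lemma rdigit_succ_add_div (hb : 0 < b) (i a : ℕ) (x : ℝ) :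
    rdigit b ((i + x) / b) (a + 2) = rdigit b x (a + 1) := by
  have hb' : (b : ℝ) ≠ 0 := by exact_mod_cast hb.ne'
  have hshift : ((i : ℝ) + x) / b * (b : ℝ) ^ (a + 2) =
      x * (b : ℝ) ^ (a + 1) + ((b * (i * b ^ a) : ℕ) : ℝ) := by
    push_cast
    field_simp
    ring
  rw [rdigit, rdigit, hshift, Int.floor_add_natCast]
  push_cast
  exact Int.add_mul_emod_self_left _ _ _

lemma walsh_add_div (hb : 1 < b) (k : ℕ) {i : ℕ} (hi : i < b) {x : ℝ}
    (hx : x ∈ Set.Ico (0 : ℝ) 1) :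
    walsh b k ((i + x) / b) = walshRoot b ^ (k % b * i) * walsh b (k / b) x := by
  have hω : walshRoot b ≠ 0 := Complex.exp_ne_zero _
  rw [walsh_eq_zpow hb (by omega : k < k + 2),
    walsh_eq_zpow hb (by have := Nat.div_le_self k b; omega : k / b < k + 1),
    Finset.sum_range_succ', zpow_add₀ hω, mul_comm]
  congr 1
  · rw [zero_add, rdigit_one_add_div hi hx, bdigit_zero_right]
    exact_mod_cast zpow_natCast (walshRoot b) (k % b * i)
  · congr 1
    exact Finset.sum_congr rfl fun a _ => by
      rw [bdigit_succ, rdigit_succ_add_div (by omega : 0 < b)]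

lemma sum_conj_walshRoot_pow_mul (hb : 0 < b) {k l : ℕ} (hk : k < b) (hl : l < b) :
    ∑ i ∈ Finset.range b, conj (walshRoot b ^ (k * i)) * walshRoot b ^ (l * i) =
      if k = l then (b : ℂ) else 0 := by
  have hprim : IsPrimitiveRoot (walshRoot b) b := Complex.isPrimitiveRoot_exp b hb.ne'
  have hunit (m : ℕ) : walshRoot b ^ m * conj (walshRoot b ^ m) = 1 := by
    rw [Complex.mul_conj', norm_pow, norm_walshRoot hb.ne']
    simp
  set z := conj (walshRoot b ^ k) * walshRoot b ^ l with hz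
  have hterm (i : ℕ) : conj (walshRoot b ^ (k * i)) * walshRoot b ^ (l * i) = z ^ i := by
    rw [hz, mul_pow, ← map_pow, ← pow_mul, ← pow_mul]
  simp only [hterm]
  split_ifs with h
  · have hz₁ : z = 1 := by rw [hz, h, mul_comm, hunit]
    simp [hz₁]
  · have hz₁ : z ≠ 1 := fun hz₁ => h <| hprim.pow_inj hk hl <| by
      rw [← mul_one (walshRoot b ^ k), ← hz₁, hz, ← mul_assoc, hunit, one_mul]
    have hzb : z ^ b = 1 := by
      rw [hz, mul_pow, ← map_pow, ← pow_mul, ← pow_mul, mul_comm k, mul_comm l, pow_mul, pow_mul,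
        hprim.pow_eq_one]
      simp
    rw [geom_sum_eq hz₁, hzb, sub_self, zero_div]

lemma setIntegral_Ico_eq_sum (hb : 0 < b) {f : ℝ → ℂ} (hf : IntegrableOn f (Set.Ico 0 1)) :
    ∫ x in Set.Ico (0 : ℝ) 1, f x =
      1 / (b : ℂ) * ∑ i ∈ Finset.range b, ∫ x in Set.Ico (0 : ℝ) 1, f ((i + x) / b) := by
  have hb' : (0 : ℝ) < b := by exact_mod_cast hb
  have hIco (f : ℝ → ℂ) : ∫ x in Set.Ico (0 : ℝ) 1, f x = ∫ x in (0 : ℝ)..1, f x := by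
    rw [integral_Ico_eq_integral_Ioc, intervalIntegral.integral_of_le zero_le_one]
  have hint : IntervalIntegrable f volume 0 1 :=
    (intervalIntegrable_iff_integrableOn_Ico_of_le zero_le_one).2 hf
  have hcut : ∑ i ∈ Finset.range b, ∫ x in (i : ℝ) / b..(i + 1 : ℕ) / b, f x =
      ∫ x in (0 : ℝ)..1, f x := by
    have h := intervalIntegral.sum_integral_adjacent_intervals (f := f) (μ := volume)
      (a := fun i : ℕ => (i : ℝ) / b) (n := b) fun i hi => hint.mono_set <| by
        rw [Set.uIcc_of_le (by gcongr; simp), Set.uIcc_of_le zero_le_one]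
        exact Set.Icc_subset_Icc (by positivity) ((div_le_one hb').2 (by exact_mod_cast hi))
    simpa [hb'.ne'] using h
  have hscale (i : ℕ) : ∫ x in (i : ℝ) / b..(i + 1 : ℕ) / b, f x =
      1 / (b : ℂ) * ∫ x in (0 : ℝ)..1, f ((i + x) / b) := by
    have h := intervalIntegral.integral_comp_add_div (a := 0) (b := 1) f hb'.ne' ((i : ℝ) / b)
    simp only [← add_div, add_zero] at h
    rw [h, Complex.real_smul, ← mul_assoc, Nat.cast_succ]
    push_cast
    rw [one_div_mul_cancel (by exact_mod_cast hb.ne'), one_mul]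
  simp only [hIco, ← hcut, hscale, Finset.mul_sum]

/-- The `k`-th Walsh coefficient of a function on `[0,1)`. -/
noncomputable def walshCoeff (b : ℕ) (f : ℝ → ℂ) (k : ℕ) : ℂ :=
  ∫ x in Set.Ico (0 : ℝ) 1, f x * conj (walsh b k x)

lemma integrable_mul_conj_walsh (hb : 1 < b) {f : ℝ → ℂ} {μ : Measure ℝ} (hf : Integrable f μ)
    (k : ℕ) : Integrable (fun x => f x * conj (walsh b k x)) μ :=
  hf.mul_bdd (c := 1)
    (Complex.continuous_conj.measurable.comp (measurable_walsh b k)).aestronglyMeasurable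
    (Filter.Eventually.of_forall fun x => by rw [RCLike.norm_conj, norm_walsh hb])

lemma walshCoeff_sum (hb : 1 < b) {ι : Type*} (S : Finset ι) (c : ι → ℂ) {f : ι → ℝ → ℂ}
    (hf : ∀ i ∈ S, IntegrableOn (f i) (Set.Ico 0 1)) (k : ℕ) :
    walshCoeff b (fun x => ∑ i ∈ S, c i * f i x) k = ∑ i ∈ S, c i * walshCoeff b (f i) k := by
  simp only [walshCoeff, Finset.sum_mul, mul_assoc]
  rw [integral_finsetSum S fun i hi => (integrable_mul_conj_walsh hb (hf i hi) k).const_mul (c i)]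
  simp only [integral_const_mul]

lemma walshCoeff_const_mul (b : ℕ) (c : ℂ) (f : ℝ → ℂ) (k : ℕ) :
    walshCoeff b (fun x => c * f x) k = c * walshCoeff b f k := by
  simp only [walshCoeff, mul_assoc, integral_const_mul]

/-- Each of the intervals `[i/b, (i+1)/b)` is rescaled to `[0,1)`, which strips the lowest digit
of `k`. -/
lemma walshCoeff_eq (hb : 1 < b) {f : ℝ → ℂ} (hf : IntegrableOn f (Set.Ico 0 1)) (k : ℕ) :
    walshCoeff b f k = 1 / (b : ℂ) * ∑ i ∈ Finset.range b,
      conj (walshRoot b ^ (k % b * i)) * walshCoeff b (fun x => f ((i + x) / b)) (k / b) := by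
  rw [walshCoeff, setIntegral_Ico_eq_sum hb.le (integrable_mul_conj_walsh hb hf k)]
  congr 1
  refine Finset.sum_congr rfl fun i hi => ?_
  rw [walshCoeff, ← integral_const_mul]
  refine setIntegral_congr_fun measurableSet_Ico fun x hx => ?_
  rw [walsh_add_div hb k (Finset.mem_range.1 hi) hx, map_mul]
  ring

lemma walshCoeff_congr {f g : ℝ → ℂ} (h : Set.EqOn f g (Set.Ico 0 1)) (k : ℕ) :
    walshCoeff b f k = walshCoeff b g k :=
  setIntegral_congr_fun measurableSet_Ico fun x hx => by simp only [h hx]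

/-- The `(k,l)`-th Walsh coefficient `∫∫ h(x,y) conj(wal_k(x)) wal_l(y) dx dy`, with the inner
integral written as the conjugate of a one-dimensional Walsh coefficient. -/
noncomputable def walshCoeff₂ (b : ℕ) (h : ℝ → ℝ → ℝ) (k l : ℕ) : ℂ :=
  walshCoeff b (fun x => conj (walshCoeff b (fun y => (h x y : ℂ)) l)) k

lemma conj_walshCoeff_ofReal (b : ℕ) (f : ℝ → ℝ) (k : ℕ) :
    conj (walshCoeff b (fun x => (f x : ℂ)) k) =
      ∫ x in Set.Ico (0 : ℝ) 1, (f x : ℂ) * walsh b k x := by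
  rw [walshCoeff, ← integral_conj]
  simp only [map_mul, Complex.conj_ofReal, Complex.conj_conj]

variable {h : ℝ → ℝ → ℝ}

lemma integrableOn_ofReal_of_continuous {f : ℝ → ℝ} (hf : Continuous f) :
    IntegrableOn (fun x => (f x : ℂ)) (Set.Ico 0 1) :=
  (Complex.continuous_ofReal.comp hf).integrableOn_Icc.mono_set Set.Ico_subset_Icc_self

lemma integrableOn_conj_walshCoeff (hb : 1 < b) (hh : Continuous (Function.uncurry h)) (l : ℕ) :
    IntegrableOn (fun x => conj (walshCoeff b (fun y => (h x y : ℂ)) l)) (Set.Ico 0 1) := by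
  simp only [conj_walshCoeff_ofReal]
  have hsquare : Integrable (fun z : ℝ × ℝ => (h z.1 z.2 : ℂ))
      ((volume.restrict (Set.Ico 0 1)).prod (volume.restrict (Set.Ico 0 1))) := by
    rw [Measure.prod_restrict]
    exact ((Complex.continuous_ofReal.comp hh).continuousOn.integrableOn_compact
      (isCompact_Icc.prod isCompact_Icc)).mono_set
      (Set.prod_mono Set.Ico_subset_Icc_self Set.Ico_subset_Icc_self)
  exact (hsquare.mul_bdd (c := 1)
    ((measurable_walsh b l).comp measurable_snd).aestronglyMeasurable
    (Filter.Eventually.of_forall fun z => (norm_walsh hb l z.2).le)).integral_prod_left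

lemma walshCoeff₂_sum (hb : 1 < b) {ι : Type*} (S : Finset ι) {h : ι → ℝ → ℝ → ℝ}
    (hh : ∀ i, Continuous (Function.uncurry (h i))) (k l : ℕ) :
    walshCoeff₂ b (fun x y => ∑ i ∈ S, h i x y) k l = ∑ i ∈ S, walshCoeff₂ b (h i) k l := by
  have hlin {f : ι → ℝ → ℂ} (hf : ∀ i, IntegrableOn (f i) (Set.Ico 0 1)) (k : ℕ) :
      walshCoeff b (fun x => ∑ i ∈ S, f i x) k = ∑ i ∈ S, walshCoeff b (f i) k := by
    simpa only [one_mul] using walshCoeff_sum hb S (fun _ => 1) (fun i _ => hf i) k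
  have hinner (x : ℝ) : conj (walshCoeff b (fun y => ((∑ i ∈ S, h i x y : ℝ) : ℂ)) l) =
      ∑ i ∈ S, conj (walshCoeff b (fun y => (h i x y : ℂ)) l) := by
    simp only [Complex.ofReal_sum]
    rw [hlin fun i => integrableOn_ofReal_of_continuous ((hh i).uncurry_left x), map_sum]
  simp only [walshCoeff₂, hinner]
  exact hlin (fun i => integrableOn_conj_walshCoeff hb (hh i) l) k

lemma walshCoeff₂_add (hb : 1 < b) {h' : ℝ → ℝ → ℝ} (hh : Continuous (Function.uncurry h))
    (hh' : Continuous (Function.uncurry h')) (k l : ℕ) :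
    walshCoeff₂ b (fun x y => h x y + h' x y) k l = walshCoeff₂ b h k l + walshCoeff₂ b h' k l := by
  simpa only [Fin.sum_univ_two, Matrix.cons_val_zero, Matrix.cons_val_one] using
    walshCoeff₂_sum hb (h := ![h, h']) Finset.univ (Fin.forall_fin_two.2 ⟨hh, hh'⟩) k l

lemma walshCoeff₂_eq (hb : 1 < b) (hh : Continuous (Function.uncurry h)) (k l : ℕ) :
    walshCoeff₂ b h k l = 1 / (b : ℂ) ^ 2 * ∑ i ∈ Finset.range b, ∑ j ∈ Finset.range b,
      conj (walshRoot b ^ (k % b * i)) * walshRoot b ^ (l % b * j) *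
        walshCoeff₂ b (fun x y => h ((i + x) / b) ((j + y) / b)) (k / b) (l / b) := by
  have hcont (i j : ℕ) :
      Continuous (Function.uncurry fun x y : ℝ => h ((i + x) / b) ((j + y) / b)) :=
    hh.comp (by fun_prop : Continuous fun z : ℝ × ℝ => ((i + z.1) / (b : ℝ), (j + z.2) / (b : ℝ)))
  have hinner (x : ℝ) : conj (walshCoeff b (fun y => (h x y : ℂ)) l) =
      ∑ j ∈ Finset.range b, 1 / (b : ℂ) * walshRoot b ^ (l % b * j) *
        conj (walshCoeff b (fun y => (h x ((j + y) / b) : ℂ)) (l / b)) := by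
    rw [walshCoeff_eq hb (integrableOn_ofReal_of_continuous (hh.uncurry_left x)), Finset.mul_sum]
    simp only [map_sum, map_mul, map_div₀, map_one, map_natCast, Complex.conj_conj, mul_assoc]
  rw [walshCoeff₂, walshCoeff_eq hb (integrableOn_conj_walshCoeff hb hh l), pow_two,
    ← one_div_mul_one_div, mul_assoc]
  congr 1
  rw [Finset.mul_sum]
  refine Finset.sum_congr rfl fun i _ => ?_
  simp only [hinner]
  rw [walshCoeff_sum hb _ _ fun j _ => integrableOn_conj_walshCoeff hb (hcont i j) (l / b),
    Finset.mul_sum, Finset.mul_sum]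
  exact Finset.sum_congr rfl fun j _ => by rw [walshCoeff₂]; ring

lemma walshCoeff₂_congr {h h' : ℝ → ℝ → ℝ}
    (hh : ∀ x ∈ Set.Ico (0 : ℝ) 1, ∀ y ∈ Set.Ico (0 : ℝ) 1, h x y = h' x y) (k l : ℕ) :
    walshCoeff₂ b h k l = walshCoeff₂ b h' k l :=
  walshCoeff_congr (fun x hx => congrArg conj
    (walshCoeff_congr (fun y hy => congrArg Complex.ofReal (hh x hx y hy)) l)) k

lemma walshCoeff₂_const_mul (b : ℕ) (c : ℝ) (h : ℝ → ℝ → ℝ) (k l : ℕ) :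
    walshCoeff₂ b (fun x y => c * h x y) k l = c * walshCoeff₂ b h k l := by
  simp only [walshCoeff₂, Complex.ofReal_mul, walshCoeff_const_mul, map_mul, Complex.conj_ofReal]

lemma walshCoeff₂_mul (b : ℕ) (f g : ℝ → ℝ) (k l : ℕ) :
    walshCoeff₂ b (fun x y => f x * g y) k l =
      walshCoeff b (fun x => (f x : ℂ)) k * conj (walshCoeff b (fun y => (g y : ℂ)) l) := by
  simp only [walshCoeff₂, Complex.ofReal_mul, walshCoeff_const_mul, map_mul, Complex.conj_ofReal]
  generalize conj (walshCoeff b (fun y => (g y : ℂ)) l) = c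
  simpa only [mul_comm c] using walshCoeff_const_mul b c (fun x => (f x : ℂ)) k

end Walsh

/-! ### Decay along the digit recursion -/

section Decay

variable {b : ℕ}

/-- The decay `b^{-μ_α(k)}` against which Walsh coefficients are measured. -/
noncomputable def dickDecay (b α k : ℕ) : ℝ := ((b : ℝ) ^ dick b α k)⁻¹

lemma dickDecay_pos (hb : 0 < b) (α k : ℕ) : 0 < dickDecay b α k := by
  unfold dickDecay; positivity

lemma dickDecay_eq (hb : 1 < b) (α k : ℕ) :
    dickDecay b α k = ((b : ℝ) ^ min α (hamming b k))⁻¹ * dickDecay b α (k / b) := by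
  rw [dickDecay, dick_eq hb, pow_add, mul_inv, dickDecay]

lemma isBigO_mod_mul_div (hb : 0 < b) (c : ℕ → ℂ) {f : ℕ → ℂ} {B : ℕ → ℝ} (hf : f =O[⊤] B) :
    (fun k => c (k % b) * f (k / b)) =O[⊤] fun k => B (k / b) := by
  have hc : (fun k => c (k % b)) =O[⊤] fun _ => (1 : ℝ) :=
    isBigO_top.2 ⟨∑ i ∈ Finset.range b, ‖c i‖, fun k => by
      rw [norm_one, mul_one]
      exact Finset.single_le_sum (f := fun i => ‖c i‖) (fun i _ => norm_nonneg _)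
        (Finset.mem_range.2 (Nat.mod_lt k hb))⟩
  simpa only [one_mul, Function.comp_def] using
    hc.mul (hf.comp_tendsto (Filter.tendsto_top : Filter.Tendsto (· / b) ⊤ ⊤))

lemma dickDecay_zero (b α : ℕ) : dickDecay b α 0 = 1 := by simp [dickDecay, dick, bsupp_zero]

lemma add_div_pow_le_of_lt (hb : 1 < b) {e P : ℕ} (he : e < P) {D B : ℝ} (hD : 0 ≤ D)
    (hB : 0 ≤ B) : (3 * D + B) / (b : ℝ) ^ P ≤ (2 * D + B) / (b : ℝ) ^ e := by
  have htwo : (b : ℝ) ^ e * 2 ≤ (b : ℝ) ^ P :=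
    calc (b : ℝ) ^ e * 2 ≤ (b : ℝ) ^ e * b := by gcongr; exact_mod_cast hb
      _ = (b : ℝ) ^ (e + 1) := (pow_succ _ _).symm
      _ ≤ (b : ℝ) ^ P := pow_le_pow_right₀ (by exact_mod_cast hb.le) he
  calc (3 * D + B) / (b : ℝ) ^ P ≤ (2 * (2 * D + B)) / ((b : ℝ) ^ e * 2) := by
        gcongr
        linarith
    _ = (2 * D + B) / (b : ℝ) ^ e := by rw [mul_comm 2, mul_div_mul_right _ _ two_ne_zero]

section Recursion

variable {α c P : ℕ} {f r : ℕ → ℂ}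

/-- Along `k ↦ k / b` the quantity `‖f k‖ b^{c μ_α(k)}` contracts as long as
`c min(α, κ(k)) < P`; it does not grow once equality holds, except at the first such step. -/
lemma norm_le_of_recursion (hb : 1 < b) {D : ℝ} (hD : 0 ≤ D)
    (hrec : ∀ k, ‖f k‖ ≤ ‖f (k / b)‖ / (b : ℝ) ^ P + ‖r k‖)
    (hf : ∀ k, P < c * min α (hamming b k) → f k = 0)
    (hr : ∀ k, P ≤ c * min α (hamming b (k / b)) → r k = 0)
    (hrD : ∀ k, ‖r k‖ ≤ D / (b : ℝ) ^ P * dickDecay b α (k / b) ^ c) (k : ℕ) :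
    ‖f k‖ ≤ ((if c * min α (hamming b k) < P then 2 * D else 3 * D) + ‖f 0‖) *
      dickDecay b α k ^ c := by
  have hW (k : ℕ) : 0 < dickDecay b α k ^ c := pow_pos (dickDecay_pos hb.le α k) c
  induction k using Nat.strong_induction_on with
  | h k ih =>
    rcases eq_or_ne k 0 with rfl | hk
    · rw [dickDecay_zero, one_pow, mul_one]
      exact le_add_of_nonneg_left (by split_ifs <;> positivity)
    rcases lt_or_ge P (c * min α (hamming b k)) with hlt | hle
    · rw [hf k hlt, norm_zero]
      have := hW k
      split_ifs <;> positivity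
    have hstep : ‖f k‖ ≤ (3 * D + ‖f 0‖) / (b : ℝ) ^ P * dickDecay b α (k / b) ^ c := by
      have hdiv := div_le_div_of_nonneg_right (ih (k / b) (Nat.div_lt_self (by omega) hb))
        (by positivity : 0 ≤ (b : ℝ) ^ P)
      refine (hrec k).trans ?_
      split_ifs at hdiv with hlt
      · exact (add_le_add hdiv (hrD k)).trans_eq (by ring)
      · rw [hr k (not_lt.1 hlt), norm_zero, add_zero]
        exact hdiv.trans_eq (by ring)
    refine hstep.trans ?_
    rw [dickDecay_eq hb α k, mul_pow, inv_pow, ← pow_mul, mul_comm _ c, ← mul_assoc,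
      ← div_eq_mul_inv]
    refine mul_le_mul_of_nonneg_right ?_ (hW (k / b)).le
    split_ifs with hlt
    · exact add_div_pow_le_of_lt hb hlt hD (norm_nonneg _)
    · rw [le_antisymm hle (not_lt.1 hlt)]

theorem isBigO_dickDecay_pow_of_recursion (hb : 1 < b)
    (hrec : ∀ k, ‖f k‖ ≤ ‖f (k / b)‖ / (b : ℝ) ^ P + ‖r k‖)
    (hf : ∀ k, P < c * min α (hamming b k) → f k = 0)
    (hr : ∀ k, P ≤ c * min α (hamming b (k / b)) → r k = 0)
    (hrO : r =O[⊤] fun k => dickDecay b α (k / b) ^ c) :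
    f =O[⊤] fun k => dickDecay b α k ^ c := by
  have hW (k : ℕ) : 0 < dickDecay b α k ^ c := pow_pos (dickDecay_pos hb.le α k) c
  obtain ⟨D, hD, hrD⟩ := hrO.exists_nonneg
  have hbound := norm_le_of_recursion hb (by positivity : 0 ≤ D * (b : ℝ) ^ P) hrec hf hr
    fun k => by
      rw [mul_div_cancel_right₀ _ (by positivity), ← Real.norm_of_nonneg (hW (k / b)).le]
      exact isBigOWith_top.1 hrD k
  refine isBigO_top.2 ⟨3 * (D * (b : ℝ) ^ P) + ‖f 0‖, fun k => ?_⟩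
  rw [Real.norm_of_nonneg (hW k).le]
  refine (hbound k).trans (mul_le_mul_of_nonneg_right (add_le_add_left ?_ _) (hW k).le)
  split_ifs
  · gcongr
    norm_num
  · exact le_rfl

end Recursion

end Decay

/-! ### Polynomials -/

section Polynomials

open Polynomial

variable {b : ℕ}

/-- The `k`-th Walsh coefficient of `x ↦ x^p`. -/
noncomputable def monomialCoeff (b p k : ℕ) : ℂ := walshCoeff b (fun x => ((x ^ p : ℝ) : ℂ)) k

/-- The factor with which `monomialCoeff b q (k / b)` enters `monomialCoeff b p k`, where `κ` is
the lowest digit of `k`. -/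
noncomputable def monomialTransfer (b p q κ : ℕ) : ℂ :=
  1 / (b : ℂ) ^ (p + 1) * ∑ i ∈ Finset.range b,
    conj (walshRoot b ^ (κ * i)) * ((i : ℂ) ^ (p - q) * p.choose q)

lemma monomialTransfer_self (hb : 0 < b) (p : ℕ) {κ : ℕ} (hκ : κ < b) :
    monomialTransfer b p p κ = if κ = 0 then 1 / (b : ℂ) ^ p else 0 := by
  have h := sum_conj_walshRoot_pow_mul hb hκ hb
  simp only [zero_mul, pow_zero, mul_one] at h
  have hb' : (b : ℂ) ≠ 0 := by exact_mod_cast hb.ne'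
  simp only [monomialTransfer, Nat.sub_self, pow_zero, Nat.choose_self, Nat.cast_one, mul_one, h]
  split_ifs
  · rw [pow_succ, ← one_div_mul_one_div, mul_assoc, one_div_mul_cancel hb', mul_one]
  · rw [mul_zero]

lemma monomialCoeff_eq (hb : 1 < b) (p k : ℕ) :
    monomialCoeff b p k = ∑ q ∈ Finset.range (p + 1),
      monomialTransfer b p q (k % b) * monomialCoeff b q (k / b) := by
  have hexp (i : ℕ) : (fun x : ℝ => (((((i + x) / b) ^ p : ℝ)) : ℂ)) = fun x =>
      ∑ q ∈ Finset.range (p + 1), ((i : ℂ) ^ (p - q) * p.choose q / (b : ℂ) ^ p) *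
        ((x ^ q : ℝ) : ℂ) := by
    funext x
    rw [add_comm, div_pow, add_pow, Finset.sum_div]
    push_cast
    exact Finset.sum_congr rfl fun q _ => by ring
  rw [monomialCoeff, walshCoeff_eq hb (integrableOn_ofReal_of_continuous (continuous_pow p))]
  simp only [hexp]
  simp only [walshCoeff_sum hb _ _ fun q _ =>
    integrableOn_ofReal_of_continuous (continuous_pow q), Finset.mul_sum]
  rw [Finset.sum_comm]
  refine Finset.sum_congr rfl fun q _ => ?_
  rw [monomialTransfer, Finset.mul_sum, Finset.sum_mul]
  refine Finset.sum_congr rfl fun i _ => ?_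
  rw [monomialCoeff, pow_succ]
  ring

lemma monomialCoeff_eq_zero (hb : 1 < b) {p k : ℕ} (h : p < hamming b k) :
    monomialCoeff b p k = 0 := by
  induction k using Nat.strong_induction_on generalizing p with
  | h k ih =>
    have hk : k ≠ 0 := by
      rintro rfl
      simp only [hamming_zero, Nat.not_lt_zero] at h
    have hdigit := hamming_eq hb k
    rw [monomialCoeff_eq hb]
    refine Finset.sum_eq_zero fun q hq => ?_
    have hqp : q ≤ p := Finset.mem_range_succ_iff.1 hq
    by_cases hvanish : k % b ≠ 0 ∧ q = p
    · rw [hvanish.2, monomialTransfer_self hb.le p (Nat.mod_lt k hb.le), if_neg hvanish.1, zero_mul]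
    · rw [ih (k / b) (Nat.div_lt_self (by omega) hb) (by split_ifs at hdigit <;> omega), mul_zero]

theorem isBigO_monomialCoeff (hb : 1 < b) (α p : ℕ) :
    monomialCoeff b p =O[⊤] dickDecay b α := by
  induction p using Nat.strong_induction_on with
  | h p ih =>
    suffices h : monomialCoeff b p =O[⊤] fun k => dickDecay b α k ^ 1 by
      simpa only [pow_one] using h
    refine isBigO_dickDecay_pow_of_recursion hb (P := p)
      (r := fun k => ∑ q ∈ Finset.range p,
        monomialTransfer b p q (k % b) * monomialCoeff b q (k / b)) (fun k => ?_)
      (fun k hk => monomialCoeff_eq_zero hb (by omega)) (fun k hk => ?_) ?_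
    · rw [monomialCoeff_eq hb, Finset.sum_range_succ, add_comm]
      refine (norm_add_le _ _).trans (add_le_add_left ?_ _)
      rw [monomialTransfer_self hb.le p (Nat.mod_lt k hb.le)]
      split_ifs
      · simp [div_eq_inv_mul]
      · rw [zero_mul, norm_zero]
        positivity
    · refine Finset.sum_eq_zero fun q hq => ?_
      have hqp := Finset.mem_range.1 hq
      rw [monomialCoeff_eq_zero hb (by omega), mul_zero]
    · simp only [pow_one]
      exact .fun_sum fun q hq => isBigO_mod_mul_div hb.le (monomialTransfer b p q)
        (ih q (Finset.mem_range.1 hq))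

/-- The `k`-th Walsh coefficient of a real polynomial function. -/
noncomputable def polyCoeff (b : ℕ) (P : ℝ[X]) (k : ℕ) : ℂ :=
  walshCoeff b (fun x => ((P.eval x : ℝ) : ℂ)) k

lemma polyCoeff_eq_sum (hb : 1 < b) (P : ℝ[X]) (k : ℕ) :
    polyCoeff b P k =
      ∑ p ∈ Finset.range (P.natDegree + 1), (P.coeff p : ℂ) * monomialCoeff b p k := by
  simp only [polyCoeff, eval_eq_sum_range, Complex.ofReal_sum, Complex.ofReal_mul]
  exact walshCoeff_sum hb _ _
    (fun p _ => integrableOn_ofReal_of_continuous (continuous_pow p)) k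

lemma polyCoeff_eq_zero (hb : 1 < b) {P : ℝ[X]} {k : ℕ} (h : P.natDegree < hamming b k) :
    polyCoeff b P k = 0 := by
  rw [polyCoeff_eq_sum hb]
  refine Finset.sum_eq_zero fun p hp => ?_
  rw [monomialCoeff_eq_zero hb ((Finset.mem_range_succ_iff.1 hp).trans_lt h), mul_zero]

lemma isBigO_polyCoeff (hb : 1 < b) (α : ℕ) (P : ℝ[X]) :
    polyCoeff b P =O[⊤] dickDecay b α := by
  simp only [funext (polyCoeff_eq_sum hb P)]
  exact .fun_sum fun p _ => (isBigO_monomialCoeff hb α p).const_mul_left _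

lemma isBigO_polyCoeff_mul_conj (hb : 1 < b) (α : ℕ) (P Q : ℝ[X]) :
    (fun k => polyCoeff b P k * conj (polyCoeff b Q k)) =O[⊤] fun k => dickDecay b α k ^ 2 := by
  have hconj : (fun k => conj (polyCoeff b Q k)) =O[⊤] dickDecay b α :=
    (IsBigO.of_norm_left (by simpa only [RCLike.norm_conj] using
      (isBigO_polyCoeff hb α Q).norm_left))
  simpa only [pow_two] using (isBigO_polyCoeff hb α P).mul hconj

/-- Taylor expansion of `Q(x - y)` in powers of `x`. -/
lemma walshCoeff₂_eval_sub (hb : 1 < b) (Q : ℝ[X]) (k l : ℕ) :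
    walshCoeff₂ b (fun x y => Q.eval (x - y)) k l =
      ∑ m ∈ Finset.range (Q.natDegree + 1),
        polyCoeff b (X ^ m) k * conj (polyCoeff b ((hasseDeriv m Q).comp (-X)) l) := by
  have hexp (x y : ℝ) : Q.eval (x - y) = ∑ m ∈ Finset.range (Q.natDegree + 1),
      (X ^ m : ℝ[X]).eval x * ((hasseDeriv m Q).comp (-X)).eval y := by
    rw [sub_eq_add_neg, ← taylor_eval, eval_eq_sum_range, natDegree_taylor]
    refine Finset.sum_congr rfl fun m _ => ?_
    rw [taylor_coeff, eval_comp, eval_neg, eval_X, eval_pow, eval_X, mul_comm]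
  simp only [hexp]
  rw [walshCoeff₂_sum hb _ fun m => by fun_prop]
  simp only [walshCoeff₂_mul, polyCoeff]

lemma walshCoeff₂_eval_sub_eq_zero (hb : 1 < b) {Q : ℝ[X]} {k l : ℕ}
    (h : Q.natDegree < hamming b k + hamming b l) :
    walshCoeff₂ b (fun x y => Q.eval (x - y)) k l = 0 := by
  rw [walshCoeff₂_eval_sub hb]
  refine Finset.sum_eq_zero fun m hmQ => ?_
  have hmQ := Finset.mem_range_succ_iff.1 hmQ
  rcases lt_or_ge m (hamming b k) with hm | hm
  · rw [polyCoeff_eq_zero hb (by rwa [natDegree_X_pow]), zero_mul]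
  · have hdeg : ((hasseDeriv m Q).comp (-X)).natDegree ≤ Q.natDegree - m := by
      rw [natDegree_comp, natDegree_neg, natDegree_X, mul_one]
      exact natDegree_hasseDeriv_le Q m
    have hl : ((hasseDeriv m Q).comp (-X)).natDegree < hamming b l := by omega
    rw [polyCoeff_eq_zero hb hl, map_zero, mul_zero]

lemma isBigO_walshCoeff₂_eval_sub (hb : 1 < b) (α : ℕ) (Q : ℝ[X]) :
    (fun k => walshCoeff₂ b (fun x y => Q.eval (x - y)) k k) =O[⊤]
      fun k => dickDecay b α k ^ 2 := by
  simp only [walshCoeff₂_eval_sub hb]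
  exact .fun_sum fun m _ => isBigO_polyCoeff_mul_conj hb α _ _

end Polynomials

/-! ### Powers of the distance -/

section AbsSubPow

open Polynomial

variable {b : ℕ}

/-- The `(k,l)`-th Walsh coefficient of `(x,y) ↦ |x - y|^n`. -/
noncomputable def absCoeff (b n k l : ℕ) : ℂ := walshCoeff₂ b (fun x y => |x - y| ^ n) k l

/-- The factor with which the cell `[i/b, (i+1)/b) × [j/b, (j+1)/b)`, `z = (i,j)`, enters
`absCoeff b n k l`, where `κ` and `κ'` are the lowest digits of `k` and `l`. -/
noncomputable def absTransfer (b n κ κ' : ℕ) (z : ℕ × ℕ) : ℂ :=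
  1 / (b : ℂ) ^ (n + 2) * (conj (walshRoot b ^ (κ * z.1)) * walshRoot b ^ (κ' * z.2)) *
    ((SignType.sign ((z.1 : ℝ) - z.2) : ℝ) : ℂ) ^ n

lemma abs_sub_add_natCast_sub {x y : ℝ} (hx : x ∈ Set.Ico (0 : ℝ) 1) (hy : y ∈ Set.Ico (0 : ℝ) 1)
    {i j : ℕ} (hij : i ≠ j) :
    |x - y + ((i : ℝ) - j)| = SignType.sign ((i : ℝ) - j) * (x - y + ((i : ℝ) - j)) := by
  obtain ⟨hx₀, hx₁⟩ := hx
  obtain ⟨hy₀, hy₁⟩ := hy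
  rcases hij.lt_or_gt with h | h
  · have hcast : (i : ℝ) + 1 ≤ j := by exact_mod_cast h
    rw [abs_of_neg (by linarith), sign_neg (by linarith)]
    simp
  · have hcast : (j : ℝ) + 1 ≤ i := by exact_mod_cast h
    rw [abs_of_pos (by linarith), sign_pos (by linarith)]
    simp

lemma walshCoeff₂_abs_sub_pow_cell_self (n i k l : ℕ) :
    walshCoeff₂ b (fun x y => |((i : ℝ) + x) / b - (i + y) / b| ^ n) k l =
      1 / (b : ℂ) ^ n * absCoeff b n k l := by
  have hscale (x y : ℝ) :
      |((i : ℝ) + x) / b - (i + y) / b| ^ n = 1 / (b : ℝ) ^ n * |x - y| ^ n := by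
    rw [← sub_div, add_sub_add_left_eq_sub, abs_div, Nat.abs_cast, div_pow, one_div_mul_eq_div]
  simp only [hscale]
  rw [walshCoeff₂_const_mul, absCoeff]
  push_cast
  rfl

lemma walshCoeff₂_abs_sub_pow_cell (n : ℕ) {i j : ℕ} (hij : i ≠ j) (k l : ℕ) :
    walshCoeff₂ b (fun x y => |((i : ℝ) + x) / b - (j + y) / b| ^ n) k l =
      1 / (b : ℂ) ^ n * ((SignType.sign ((i : ℝ) - j) : ℝ) : ℂ) ^ n *
        walshCoeff₂ b (fun x y => ((X + C ((i : ℝ) - j)) ^ n).eval (x - y)) k l := by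
  have hscale (x : ℝ) (hx : x ∈ Set.Ico (0 : ℝ) 1) (y : ℝ) (hy : y ∈ Set.Ico (0 : ℝ) 1) :
      |((i : ℝ) + x) / b - (j + y) / b| ^ n =
        1 / (b : ℝ) ^ n * (SignType.sign ((i : ℝ) - j) : ℝ) ^ n *
          ((X + C ((i : ℝ) - j)) ^ n).eval (x - y) := by
    have hnum : (i : ℝ) + x - (j + y) = x - y + ((i : ℝ) - j) := by ring
    rw [← sub_div, hnum, abs_div, Nat.abs_cast, div_pow, abs_sub_add_natCast_sub hx hy hij,
      mul_pow]
    simp only [eval_pow, eval_add, eval_X, eval_C]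
    ring
  rw [walshCoeff₂_congr hscale, walshCoeff₂_const_mul]
  push_cast
  rfl

/-- A diagonal cell rescales to the whole square; on every other cell `|x - y|^n` is a polynomial
in `x - y`. -/
lemma absCoeff_eq (hb : 1 < b) (n k l : ℕ) :
    absCoeff b n k l =
      (if k % b = l % b then 1 / (b : ℂ) ^ (n + 1) else 0) * absCoeff b n (k / b) (l / b) +
        ∑ z ∈ (Finset.range b).offDiag, absTransfer b n (k % b) (l % b) z *
          walshCoeff₂ b (fun x y => ((X + C ((z.1 : ℝ) - z.2)) ^ n).eval (x - y))
            (k / b) (l / b) := by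
  have hb' : (b : ℂ) ≠ 0 := by exact_mod_cast (by omega : b ≠ 0)
  rw [absCoeff, walshCoeff₂_eq hb (by fun_prop), ← Finset.sum_product',
    ← Finset.diag_union_offDiag, Finset.sum_union (Finset.disjoint_diag_offDiag _), mul_add]
  congr 1
  · simp only [Finset.sum_diag, walshCoeff₂_abs_sub_pow_cell_self]
    rw [← Finset.sum_mul, sum_conj_walshRoot_pow_mul hb.le (Nat.mod_lt k hb.le)
      (Nat.mod_lt l hb.le)]
    split_ifs
    · field_simp
      ring
    · simp only [zero_mul, mul_zero]
  · rw [Finset.mul_sum]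
    refine Finset.sum_congr rfl fun z hz => ?_
    rw [walshCoeff₂_abs_sub_pow_cell n (Finset.mem_offDiag.1 hz).2.2, absTransfer, pow_add]
    ring

lemma absCoeff_eq_zero (hb : 1 < b) {n k l : ℕ} (h : n + 1 < digitDist b k l) :
    absCoeff b n k l = 0 := by
  induction hm : k + l using Nat.strong_induction_on generalizing k l with
  | h m ih =>
    have hlt : k / b + l / b < m := by
      have hk := Nat.div_le_self k b
      have hl := Nat.div_le_self l b
      rcases k.eq_zero_or_pos with rfl | hk₀
      · rcases l.eq_zero_or_pos with rfl | hl₀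
        · rw [← hamming_eq_digitDist, hamming_zero] at h
          omega
        · have := Nat.div_lt_self hl₀ hb
          omega
      · have := Nat.div_lt_self hk₀ hb
        omega
    have hdist := digitDist_eq hb k l
    rw [absCoeff_eq hb, Finset.sum_eq_zero fun z _ => ?_, add_zero]
    · split_ifs at hdist ⊢
      · rw [ih _ hlt (by omega) rfl, mul_zero]
      · rw [zero_mul]
    · have hle := digitDist_le hb (k / b) (l / b)
      rw [walshCoeff₂_eval_sub_eq_zero hb, mul_zero]
      rw [natDegree_pow_X_add_C]
      split_ifs at hdist <;> omega

theorem isBigO_absCoeff (hb : 1 < b) {α : ℕ} (hα : 0 < α) :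
    (fun k => absCoeff b (2 * α - 1) k k) =O[⊤] fun k => dickDecay b α k ^ 2 := by
  refine isBigO_dickDecay_pow_of_recursion hb (P := 2 * α)
    (r := fun k => ∑ z ∈ (Finset.range b).offDiag, absTransfer b (2 * α - 1) (k % b) (k % b) z *
      walshCoeff₂ b (fun x y => ((X + C ((z.1 : ℝ) - z.2)) ^ (2 * α - 1)).eval (x - y))
        (k / b) (k / b)) (fun k => ?_) (fun k hk => by omega) (fun k hk => ?_) ?_
  · rw [absCoeff_eq hb, if_pos rfl, Nat.sub_add_cancel (by omega)]
    refine (norm_add_le _ _).trans (add_le_add_left (le_of_eq ?_) _)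
    simp [div_eq_inv_mul]
  · refine Finset.sum_eq_zero fun z _ => ?_
    rw [walshCoeff₂_eval_sub_eq_zero hb, mul_zero]
    rw [natDegree_pow_X_add_C]
    omega
  · exact .fun_sum fun z _ => isBigO_mod_mul_div hb.le
      (fun κ => absTransfer b (2 * α - 1) κ κ z) (isBigO_walshCoeff₂_eval_sub hb α _)

end AbsSubPow

/-! ### The kernel -/

section Kernel

open Polynomial

variable {b : ℕ}

/-- The Bernoulli polynomial `B_n` over `ℝ`. -/
noncomputable def realBernoulli (n : ℕ) : ℝ[X] := (Polynomial.bernoulli n).map (algebraMap ℚ ℝ)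

lemma eval_realBernoulli (n : ℕ) (x : ℝ) : (realBernoulli n).eval x = bernoulliPoly n x := by
  rw [realBernoulli, bernoulliPoly, eval_map_algebraMap]

lemma natDegree_realBernoulli_le (n : ℕ) : (realBernoulli n).natDegree ≤ n := by
  refine natDegree_map_le.trans (natDegree_le_iff_coeff_eq_zero.2 fun i hi => ?_)
  rw [coeff_bernoulli, if_neg hi.not_ge]

/-- The polynomial `B_n + (n/2) X^(n-1)`, which is even for even `n` and agrees up to the
term `(n/2) |t|^(n-1)` with `B_n(|t|)`. -/
noncomputable def evenBernoulli (n : ℕ) : ℝ[X] :=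
  realBernoulli n + C ((n : ℝ) / 2) * X ^ (n - 1)

lemma natDegree_evenBernoulli_le (n : ℕ) : (evenBernoulli n).natDegree ≤ n :=
  natDegree_add_le_of_degree_le (natDegree_realBernoulli_le n)
    ((natDegree_C_mul_X_pow_le _ _).trans (n.sub_le 1))

lemma bernoulliPoly_abs {n : ℕ} (hn : Even n) (hn₀ : n ≠ 0) (t : ℝ) :
    bernoulliPoly n |t| = (evenBernoulli n).eval t + -((n : ℝ) / 2) * |t| ^ (n - 1) := by
  have hneg : bernoulliPoly n (-t) = bernoulliPoly n t + n * t ^ (n - 1) := by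
    have h := congrArg (aeval t) (bernoulli_comp_neg_X n)
    rw [hn.neg_one_pow, one_smul, aeval_comp] at h
    simpa [bernoulliPoly] using h
  simp only [evenBernoulli, eval_add, eval_mul, eval_C, eval_pow, eval_X, eval_realBernoulli]
  rcases le_total 0 t with ht | ht
  · rw [abs_of_nonneg ht]
    ring
  · have hodd : Odd (n - 1) := Nat.Even.sub_odd (by omega) hn odd_one
    rw [abs_of_nonpos ht, hneg, hodd.neg_pow]
    ring

lemma Kker_eq {α : ℕ} (hα : 0 < α) (x y : ℝ) :
    Kker α x y =
      ∑ r ∈ Finset.range (α + 1),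
        1 / (r.factorial : ℝ) ^ 2 * ((realBernoulli r).eval x * (realBernoulli r).eval y) +
      (-1) ^ (α + 1) / ((2 * α).factorial : ℝ) *
        ((evenBernoulli (2 * α)).eval (x - y) + -α * |x - y| ^ (2 * α - 1)) := by
  rw [Kker, bernoulliPoly_abs (even_two_mul α) (by omega)]
  simp only [eval_realBernoulli]
  push_cast
  congr 1
  · exact Finset.sum_congr rfl fun r _ => by ring
  · ring

lemma Khat_eq_walshCoeff₂ (b α k l : ℕ) : Khat b α k l = walshCoeff₂ b (Kker α) k l := by
  simp only [Khat, walshCoeff₂, conj_walshCoeff_ofReal]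
  simp only [walshCoeff, ← integral_mul_const, mul_right_comm]

lemma Khat_eq (hb : 1 < b) {α : ℕ} (hα : 0 < α) (k l : ℕ) :
    Khat b α k l =
      ∑ r ∈ Finset.range (α + 1), ((1 / (r.factorial : ℝ) ^ 2 : ℝ) : ℂ) *
        (polyCoeff b (realBernoulli r) k * conj (polyCoeff b (realBernoulli r) l)) +
      (((-1) ^ (α + 1) / ((2 * α).factorial : ℝ) : ℝ) : ℂ) *
        (walshCoeff₂ b (fun x y => (evenBernoulli (2 * α)).eval (x - y)) k l +
          -α * absCoeff b (2 * α - 1) k l) := by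
  have hpoly (P : ℝ[X]) {f : ℝ × ℝ → ℝ} (hf : Continuous f) :
      Continuous fun z => P.eval (f z) := P.continuous.comp hf
  have hprod (r : ℕ) : Continuous (Function.uncurry fun x y : ℝ =>
      1 / (r.factorial : ℝ) ^ 2 * ((realBernoulli r).eval x * (realBernoulli r).eval y)) :=
    ((hpoly _ continuous_fst).mul (hpoly _ continuous_snd)).const_mul _
  have heven : Continuous (Function.uncurry fun x y : ℝ =>
      (evenBernoulli (2 * α)).eval (x - y)) := hpoly _ (continuous_fst.sub continuous_snd)
  have habs : Continuous (Function.uncurry fun x y : ℝ => -(α : ℝ) * |x - y| ^ (2 * α - 1)) := by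
    fun_prop
  have hsum : Continuous (Function.uncurry fun x y : ℝ => ∑ r ∈ Finset.range (α + 1),
      1 / (r.factorial : ℝ) ^ 2 * ((realBernoulli r).eval x * (realBernoulli r).eval y)) :=
    continuous_finsetSum _ fun r _ => hprod r
  rw [Khat_eq_walshCoeff₂, walshCoeff₂_congr fun x _ y _ => Kker_eq hα x y,
    walshCoeff₂_add hb hsum ((heven.add habs).const_mul _), walshCoeff₂_sum hb _ hprod,
    walshCoeff₂_const_mul, walshCoeff₂_add hb heven habs, walshCoeff₂_const_mul]
  simp only [walshCoeff₂_const_mul, walshCoeff₂_mul, absCoeff, polyCoeff, Complex.ofReal_neg,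
    Complex.ofReal_natCast]

theorem Khat_eq_zero (hb : 1 < b) {α : ℕ} (hα : 0 < α) {k l : ℕ}
    (h : 2 * α < digitDist b k l) : Khat b α k l = 0 := by
  have hle := digitDist_le hb k l
  have hprod (r : ℕ) (hr : r ∈ Finset.range (α + 1)) :
      polyCoeff b (realBernoulli r) k * conj (polyCoeff b (realBernoulli r) l) = 0 := by
    have hdeg := natDegree_realBernoulli_le r
    rw [Finset.mem_range] at hr
    rcases (by omega : α < hamming b k ∨ α < hamming b l) with hk | hl
    · rw [polyCoeff_eq_zero hb (by omega), zero_mul]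
    · rw [polyCoeff_eq_zero hb (k := l) (by omega), map_zero, mul_zero]
  have heven := natDegree_evenBernoulli_le (2 * α)
  rw [Khat_eq hb hα, Finset.sum_eq_zero fun r hr => by rw [hprod r hr, mul_zero],
    walshCoeff₂_eval_sub_eq_zero hb (by omega), absCoeff_eq_zero hb (by omega)]
  simp only [mul_zero, add_zero]

theorem isBigO_Khat (hb : 1 < b) {α : ℕ} (hα : 0 < α) :
    (fun k => Khat b α k k) =O[⊤] fun k => dickDecay b α k ^ 2 := by
  simp only [Khat_eq hb hα]
  exact (IsBigO.fun_sum fun r _ => (isBigO_polyCoeff_mul_conj hb α _ _).const_mul_left _).add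
    (((isBigO_walshCoeff₂_eval_sub hb α _).add
      ((isBigO_absCoeff hb hα).const_mul_left _)).const_mul_left _)

lemma KhatS_eq_prod (b α : ℕ) {s : ℕ} (k l : Fin s → ℕ) :
    KhatS b α s k l = ∏ j, Khat b α (k j) (l j) := by
  have hinner (x : Fin s → ℝ) : ∫ y in Set.univ.pi fun _ : Fin s => Set.Ico (0 : ℝ) 1,
      ((∏ j, Kker α (x j) (y j) : ℝ) : ℂ) * conj (walshVec b k x) * walshVec b l y =
      ∏ j, ∫ y in Set.Ico (0 : ℝ) 1, (Kker α (x j) y : ℂ) * conj (walsh b (k j) (x j)) *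
        walsh b (l j) y := by
    rw [volume_pi, Measure.restrict_pi_pi, ← integral_fintype_prod_eq_prod]
    simp only [walshVec, Complex.ofReal_prod, map_prod, Finset.prod_mul_distrib]
  simp only [KhatS, Khat, hinner]
  rw [volume_pi, Measure.restrict_pi_pi, ← integral_fintype_prod_eq_prod]

end Kernel

section Main

lemma tsum_prod_eq_sum_diag {ι M : Type*} [AddCommMonoid M] [TopologicalSpace M] {T : Set ι}
    (hT : T.Finite) {f : ι → ι → M} (hf : T.Pairwise fun i j => f i j = 0) :
    ∑' p : T × T, f p.1 p.2 = ∑ i ∈ hT.toFinset, f i i := by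
  have := hT.fintype
  rw [tsum_fintype, Fintype.sum_prod_type, Finset.sum_subtype hT.toFinset (p := (· ∈ T)) (by simp)]
  exact Finset.sum_congr rfl fun i _ => Fintype.sum_eq_single i fun j hij =>
    hf i.2 j.2 (Subtype.coe_ne_coe.2 hij.symm)

variable {b s α : ℕ}

/-- Distinct elements of the dual net of a Chen–Skriganov net differ in more than `2α` digits
of some coordinate. -/
lemma KhatS_eq_zero_of_mem_dualNet_csNet [Fact b.Prime] {g w β : ℕ} {βe : ℕ → ℕ → ZMod b}
    (hα : 0 < α) (hg : 2 * α * s ≤ g) (hw : 0 < w)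
    (hdist : Set.InjOn (Function.uncurry βe) (Set.Iio (β * s) ×ˢ Set.Iio g)) {k l : Fin s → ℕ}
    (hk : k ∈ dualNet b (csNet b s β g w βe)) (hl : l ∈ dualNet b (csNet b s β g w βe))
    (hkl : k ≠ l) : KhatS b α s k l = 0 := by
  obtain ⟨j, hj⟩ : ∃ j, 2 * α < digitDist b (k j) (l j) := by
    by_contra! hsmall
    refine hkl (eq_of_sum_digitDist_le hdist hw hk hl ?_)
    calc ∑ j, digitDist b (k j) (l j) ≤ ∑ _j : Fin s, 2 * α := Finset.sum_le_sum fun j _ => hsmall j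
      _ = 2 * α * s := by simp [mul_comm]
      _ ≤ g := hg
  rw [KhatS_eq_prod]
  exact Finset.prod_eq_zero (Finset.mem_univ j)
    (Khat_eq_zero (Fact.out : b.Prime).one_lt hα hj)

lemma exists_norm_KhatS_self_le (hb : 1 < b) (hα : 0 < α) (s : ℕ) :
    ∃ C : ℝ, 0 < C ∧ ∀ k : Fin s → ℕ,
      ‖KhatS b α s k k‖ ≤ C * ((b : ℝ) ^ (2 * dickVec b α k))⁻¹ := by
  obtain ⟨C, hC, hbound⟩ := (isBigO_Khat hb hα).exists_pos
  refine ⟨C ^ s, by positivity, fun k => ?_⟩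
  have hcoord (j : Fin s) : ‖Khat b α (k j) (k j)‖ ≤ C * ((b : ℝ) ^ (2 * dick b α (k j)))⁻¹ := by
    have h := (isBigOWith_top.1 hbound) (k j)
    rwa [Real.norm_of_nonneg (by positivity), dickDecay, inv_pow, ← pow_mul, mul_comm _ 2] at h
  calc ‖KhatS b α s k k‖ = ∏ j, ‖Khat b α (k j) (k j)‖ := by rw [KhatS_eq_prod, norm_prod]
    _ ≤ ∏ j, C * ((b : ℝ) ^ (2 * dick b α (k j)))⁻¹ :=
      Finset.prod_le_prod (fun _ _ => norm_nonneg _) fun j _ => hcoord j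
    _ = C ^ s * ((b : ℝ) ^ (2 * dickVec b α k))⁻¹ := by
      rw [Finset.prod_mul_distrib, Fin.prod_const, Finset.prod_inv_distrib,
        Finset.prod_pow_eq_pow_sum, ← Finset.mul_sum, dickVec]

theorem main_part_bound_general [Fact b.Prime] {β : ℕ} (hs : 0 < s) (hα : 0 < α)
    (hβ : 2 * α ≤ β) :
    ∃ A : ℝ, 0 < A ∧ ∀ {g : ℕ} {βe : ℕ → ℕ → ZMod b}, 2 * α * s ≤ g →
      Set.InjOn (Function.uncurry βe) (Set.Iio (β * s) ×ˢ Set.Iio g) → ∀ w : ℕ, 0 < w →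
      ∑' p : {k : Fin s → ℕ // k ∈ dualNet b (csNet b s β g w βe) ∧ k ≠ 0} ×
          {l : Fin s → ℕ // l ∈ dualNet b (csNet b s β g w βe) ∧ l ≠ 0},
        ‖KhatS b α s p.1.1 p.2.1‖ ≤
      A * Real.log ((b : ℝ) ^ (g * w)) ^ (s - 1) / ((b : ℝ) ^ (g * w)) ^ (2 * α) := by
  have hb : 1 < b := (Fact.out : b.Prime).one_lt
  obtain ⟨C, hC, hdiag⟩ := exists_norm_KhatS_self_le hb hα s
  obtain ⟨A, hA, hsum⟩ := exists_sum_dualNet_le hb s (s * (β * β)) hα hβ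
  refine ⟨C * A, by positivity, fun {g βe} hg hdist w hw => ?_⟩
  have hg₀ : 0 < g := (by positivity : 0 < 2 * α * s).trans_le hg
  have hfin : {k | k ∈ dualNet b (csNet b s β g w βe) ∧ k ≠ 0}.Finite :=
    (finite_dualNet _).subset fun k hk => hk.1
  calc _ = ∑ k ∈ hfin.toFinset, ‖KhatS b α s k k‖ :=
        tsum_prod_eq_sum_diag hfin (f := fun k l => ‖KhatS b α s k l‖) fun k hk l hl hkl =>
          norm_eq_zero.2 (KhatS_eq_zero_of_mem_dualNet_csNet hα hg hw hdist hk.1 hl.1 hkl)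
    _ ≤ ∑ k ∈ hfin.toFinset, C * ((b : ℝ) ^ (2 * dickVec b α k))⁻¹ :=
        Finset.sum_le_sum fun k _ => hdiag k
    _ ≤ C * (A * Real.log ((b : ℝ) ^ (g * w)) ^ (s - 1) / ((b : ℝ) ^ (g * w)) ^ (2 * α)) := by
        rw [← Finset.mul_sum]
        gcongr
        exact hsum (by positivity) (isOrderNet_csNet_one hdist)
          (isOrderNet_csNet hdist (by omega)) _ fun k hk => hfin.mem_toFinset.1 hk
    _ = _ := by ring

end Main

/-- Proposition 1: the main part. Under the assumptions of the main
theorem, there is `A > 0` such that for all `w`, the digital net `P` of the paper's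
construction with `N = b^{gw}` points satisfies
`∑_{k,l ∈ P⊥\{0}} |K̂_{α,s}(k,l)| ≤ A (log N)^{s-1} / N^{2α}`. -/
theorem main_part_bound
    (b s α β g : ℕ) (hb : b.Prime) (hs : 0 < s) (hα : 2 ≤ α) (hβ : 2 * α ≤ β)
    (hg1 : 2 * α * s ≤ g) (hg2 : s * (β - 1) / 2 ≤ g) (hbs : β * g * s ≤ b)
    (βe : ℕ → ℕ → ZMod b)
    (hdist : ∀ j l j' l', j < β * s → l < g → j' < β * s → l' < g →
      βe j l = βe j' l' → j = j' ∧ l = l') :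
    ∃ A : ℝ, 0 < A ∧ ∀ w : ℕ, 0 < w →
      (∑' p : {k : Fin s → ℕ //
            k ∈ dualNet b (interlace β s (g * w) fun j => csMatrix b w (g * w) (βe j.1)) ∧
            k ≠ 0} ×
          {l : Fin s → ℕ //
            l ∈ dualNet b (interlace β s (g * w) fun j => csMatrix b w (g * w) (βe j.1)) ∧
            l ≠ 0},
          ‖KhatS b α s p.1.1 p.2.1‖) ≤
        A * Real.log ((b : ℝ) ^ (g * w)) ^ (s - 1) / ((b : ℝ) ^ (g * w)) ^ (2 * α) := by
  have : Fact b.Prime := ⟨hb⟩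
  obtain ⟨A, hA, hbound⟩ := main_part_bound_general (b := b) hs (by omega : 0 < α) hβ
  exact ⟨A, hA, hbound hg1 fun p hp q hq h =>
    Prod.ext_iff.2 (hdist _ _ _ _ hp.1 hp.2 hq.1 hq.2 h)⟩
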